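/- arXiv:2502.12394 — 8 statements merged into one kernel-verified Lean document; each statement's English description precedes it below -/
import Mathlib

section
/- For all integers n ≥ 1 and j ≥ 0, FO_{j,2}(n) = FD_{j,2}(n). -/
open Multiset Finset Filter

/-- A partition is encoded as a nonempty multiset of positive integers (its parts). -/
def IsPartition (M : Multiset ℕ) : Prop := M ≠ 0 ∧ ∀ x ∈ M, 0 < x

/-- The perimeter of a partition: (largest part) + (number of parts) - 1. -/
def perim (M : Multiset ℕ) : ℕ := M.sup + Multiset.card M - 1

/-- `rP n P` counts the partitions (of any sum) with perimeter `n` satisfying `P`. -/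
noncomputable def rP (n : ℕ) (P : Multiset ℕ → Prop) : ℕ :=
  Set.ncard {M : Multiset ℕ | IsPartition M ∧ perim M = n ∧ P M}

/-- `FO j n`: partitions with perimeter n having exactly j distinct even part values. -/
noncomputable def FO (j n : ℕ) : ℕ :=
  rP n (fun M => (M.toFinset.filter (fun v => Even v)).card = j)

/-- `FD j n`: partitions with perimeter n having exactly j distinct part values repeated (≥ 2 times). -/
noncomputable def FD (j n : ℕ) : ℕ :=
  rP n (fun M => (M.toFinset.filter (fun v => 2 ≤ M.count v)).card = j)

/-- Extend the boundary path by one step: `true` duplicates the largest part,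
`false` increases the largest part by one. -/
def pstep (b : Bool) (p : ℕ × Multiset ℕ) : ℕ × Multiset ℕ :=
  if b then (p.1, p.1 ::ₘ p.2) else (p.1 + 1, p.2)

/-- Decode a word, letters being twisted by `c`. -/
def pdec (c : List Bool → Bool) : List Bool → ℕ × Multiset ℕ
  | [] => (1, 0)
  | b :: w => pstep (xor b (c w)) (pdec c w)

/-- Valid pairs (largest part, remaining parts). -/
def PValid (p : ℕ × Multiset ℕ) : Prop := 1 ≤ p.1 ∧ ∀ x ∈ p.2, 0 < x ∧ x ≤ p.1

theorem pvalid_step (b : Bool) (p : ℕ × Multiset ℕ) (h : PValid p) : PValid (pstep b p) := by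
  obtain ⟨h1, h2⟩ := h
  cases b
  · refine ⟨by simp [pstep], ?_⟩
    intro x hx
    have := h2 x (by simpa [pstep] using hx)
    simp [pstep]; omega
  · refine ⟨by simpa [pstep] using h1, ?_⟩
    intro x hx
    simp only [pstep, if_true, Multiset.mem_cons] at hx ⊢
    rcases hx with rfl | hx
    · omega
    · exact h2 x hx

theorem pvalid_dec (c : List Bool → Bool) (w : List Bool) : PValid (pdec c w) := by
  induction w with
  | nil => simp [pdec, PValid]
  | cons b w ih => exact pvalid_step _ _ ih

theorem size_dec (c : List Bool → Bool) (w : List Bool) :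
    (pdec c w).1 + (pdec c w).2.card = w.length + 1 := by
  induction w with
  | nil => simp [pdec]
  | cons b w ih =>
    simp only [pdec, pstep, List.length_cons]
    split <;> simp <;> omega

theorem pstep_inj {b b' : Bool} {p q : ℕ × Multiset ℕ} (hp : PValid p) (hq : PValid q)
    (h : pstep b p = pstep b' q) : b = b' ∧ p = q := by
  obtain ⟨m, R⟩ := p
  obtain ⟨m', R'⟩ := q
  cases b <;> cases b' <;> simp only [pstep, if_true, Bool.false_eq_true, if_false, Prod.mk.injEq] at h
  · exact ⟨rfl, by ext1 <;> simp <;> [omega; exact h.2]⟩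
  · obtain ⟨h1, h2⟩ := h
    have := (hp.2 m' (by simp [h2])).2
    simp at this; omega
  · obtain ⟨h1, h2⟩ := h
    have := (hq.2 m (by simp [← h2])).2
    simp at this; omega
  · obtain ⟨rfl, h2⟩ := h
    simpa using h2

theorem pdec_inj (c : List Bool → Bool) (w : List Bool) :
    ∀ w', w.length = w'.length → pdec c w = pdec c w' → w = w' := by
  induction w with
  | nil => intro w' h _; exact (List.length_eq_zero_iff.1 h.symm).symm
  | cons b w ih =>
    intro w' hl h
    cases w' with
    | nil => simp at hl
    | cons b' w' =>
      obtain ⟨h1, h2⟩ := pstep_inj (pvalid_dec c w) (pvalid_dec c w') h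
      have := ih w' (by simpa using hl) h2
      subst this
      simpa using h1

theorem pdec_surj (c : List Bool → Bool) (k : ℕ) :
    ∀ p, PValid p → p.1 + p.2.card = k + 1 → ∃ w : List Bool, w.length = k ∧ pdec c w = p := by
  induction k with
  | zero =>
    rintro ⟨m, R⟩ ⟨h1, h2⟩ h
    simp only at h h1
    have hR : R.card = 0 := by omega
    refine ⟨[], rfl, ?_⟩
    rw [Multiset.card_eq_zero] at hR
    subst hR
    simp at h
    simp [pdec, h]
  | succ k ih =>
    rintro ⟨m, R⟩ ⟨h1, h2⟩ h
    simp only at h h1 h2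
    have key : ∃ b q, PValid q ∧ q.1 + q.2.card = k + 1 ∧ pstep b q = (m, R) := by
      by_cases hm : m ∈ R
      · obtain ⟨R', rfl⟩ := Multiset.exists_cons_of_mem hm
        refine ⟨true, (m, R'), ⟨h1, fun x hx => h2 x (Multiset.mem_cons_of_mem hx)⟩, ?_, rfl⟩
        simp at h ⊢; omega
      · have hm1 : m ≠ 1 := by
          rintro rfl
          have : R = 0 := by
            apply Multiset.eq_zero_of_forall_notMem
            intro x hx
            have := h2 x hx
            have : x = 1 := by omega
            exact hm (this ▸ hx)
          subst this
          simp at h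
        refine ⟨false, (m - 1, R), ⟨by simp; omega, fun x hx => ?_⟩, by simp; omega, ?_⟩
        · have := h2 x hx
          have h3 : x ≠ m := by rintro rfl; exact hm hx
          simp; omega
        · simp [pstep]; omega
    obtain ⟨b, q, hq, hs, hb⟩ := key
    obtain ⟨w, hw, rfl⟩ := ih q hq hs
    refine ⟨xor b (c w) :: w, by simp [hw], ?_⟩
    simp [pdec, hb]

theorem sup_pair (p : ℕ × Multiset ℕ) (h : PValid p) : (p.1 ::ₘ p.2).sup = p.1 := by
  rw [Multiset.sup_cons]
  exact sup_eq_left.2 (Multiset.sup_le.2 fun x hx => (h.2 x hx).2)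

theorem rP_eq (c : List Bool → Bool) (k : ℕ) (P : Multiset ℕ → Prop) :
    rP (k + 1) P =
      Set.ncard {w : List Bool | w.length = k ∧ P ((pdec c w).1 ::ₘ (pdec c w).2)} := by
  unfold rP
  symm
  apply Set.ncard_congr (fun w _ => (pdec c w).1 ::ₘ (pdec c w).2)
  · rintro w ⟨hw, hP⟩
    have hv := pvalid_dec c w
    have hs := size_dec c w
    refine ⟨⟨by simp, ?_⟩, ?_, hP⟩
    · intro x hx
      rcases Multiset.mem_cons.1 hx with rfl | hx
      · exact hv.1
      · exact (hv.2 x hx).1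
    · rw [perim, sup_pair _ hv, Multiset.card_cons]; omega
  · rintro w w' ⟨hw, -⟩ ⟨hw', -⟩ h
    apply pdec_inj c w w' (by omega)
    have h1 : (pdec c w).1 = (pdec c w').1 := by
      rw [← sup_pair _ (pvalid_dec c w), ← sup_pair _ (pvalid_dec c w')]
      exact congrArg Multiset.sup h
    simp only [h1] at h
    exact Prod.ext h1 ((Multiset.cons_inj_right _).1 h)
  · rintro M ⟨⟨h0, hpos⟩, hper, hP⟩
    have hmem : M.sup ∈ M := by
      obtain ⟨x, hx, hmax⟩ : ∃ x ∈ M, ∀ y ∈ M, y ≤ x := by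
        obtain ⟨x, hx, h⟩ := Finset.exists_max_image M.toFinset id
          (Multiset.toFinset_nonempty.2 h0)
        exact ⟨x, by simpa using hx, fun y hy => h y (by simpa using hy)⟩
      have : M.sup = x := le_antisymm (Multiset.sup_le.2 hmax) (Multiset.le_sup hx)
      rwa [this]
    obtain ⟨R, hR⟩ := Multiset.exists_cons_of_mem hmem
    have hle : ∀ x ∈ M, x ≤ M.sup := fun x hx => Multiset.le_sup hx
    have hcard := congrArg Multiset.card hR
    rw [Multiset.card_cons] at hcard
    unfold perim at hper
    generalize M.sup = m at *
    have hc : (m, R).1 + (m, R).2.card = k + 1 := by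
      simp only
      omega
    obtain ⟨w, hw, hd⟩ := pdec_surj c k (m, R)
      ⟨hpos m hmem, fun x hx => by
        have : x ∈ M := by rw [hR]; exact Multiset.mem_cons_of_mem hx
        exact ⟨hpos x this, hle x this⟩⟩ hc
    refine ⟨w, ⟨hw, ?_⟩, ?_⟩
    · rw [hd]; simpa [← hR] using hP
    · rw [hd, hR]

/-- Number of distinct even values. -/
def evN (R : Multiset ℕ) : ℕ := (R.toFinset.filter (fun v => Even v)).card

/-- Number of distinct repeated values. -/
def reN (R : Multiset ℕ) : ℕ := (R.toFinset.filter (fun v => 2 ≤ R.count v)).card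

theorem evN_cons (m : ℕ) (R : Multiset ℕ) :
    evN (m ::ₘ R) = evN R + if m % 2 = 0 ∧ R.count m = 0 then 1 else 0 := by
  unfold evN
  rw [Multiset.toFinset_cons, Finset.filter_insert]
  by_cases h : Even m
  · by_cases h' : m ∈ R
    · simp [h, h']
    · simp [h, h', Nat.even_iff.1 h]
  · simp [h, mt Nat.even_iff.2 h]

theorem reN_cons (m : ℕ) (R : Multiset ℕ) :
    reN (m ::ₘ R) = reN R + if R.count m = 1 then 1 else 0 := by
  unfold reN
  split_ifs with h
  · rw [← Finset.card_insert_of_notMem (a := m) (by simp [h])]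
    congr 1
    ext x
    by_cases hx : x = m
    · subst hx; simp [h]
    · simp [hx, Multiset.count_cons_of_ne hx]
  · rw [Nat.add_zero]
    congr 1
    ext x
    by_cases hx : x = m
    · subst hx
      simp only [Finset.mem_filter, Multiset.mem_toFinset, Multiset.mem_cons_self,
        Multiset.count_cons_self, true_and, ← Multiset.one_le_count_iff_mem]
      omega
    · simp [hx, Multiset.count_cons_of_ne hx]

/-- The untwisted decoder. -/
def cO : List Bool → Bool := fun _ => false

/-- The twist: swap the letters exactly when the current largest part is odd. -/
def cD : List Bool → Bool := fun w => decide ((pdec cO w).1 % 2 = 1)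

theorem invariant (w : List Bool) :
    evN (pdec cO w).2 = reN (pdec cD w).2 ∧
    ((pdec cO w).1 % 2 = 1 ↔ (pdec cD w).2.count (pdec cD w).1 = 0) ∧
    (((pdec cO w).1 % 2 = 0 ∧ (pdec cO w).2.count (pdec cO w).1 = 0) ↔
      (pdec cD w).2.count (pdec cD w).1 = 1) := by
  induction w with
  | nil => simp [pdec, evN, reN]
  | cons b w ih =>
    have hO := pvalid_dec cO w
    have hD := pvalid_dec cD w
    have hcD : cD w = decide ((pdec cO w).1 % 2 = 1) := rfl
    simp only [pdec, hcD]
    have hcO : cO w = false := rfl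
    rw [hcO]
    clear hcD hcO
    generalize pdec cO w = p at *
    generalize pdec cD w = q at *
    obtain ⟨m, R⟩ := p
    obtain ⟨m', R'⟩ := q
    have e1 : R.count (m + 1) = 0 := Multiset.count_eq_zero.2 fun h => by
      have := (hO.2 _ h).2
      simp at this
    have e2 : R'.count (m' + 1) = 0 := Multiset.count_eq_zero.2 fun h => by
      have := (hD.2 _ h).2
      simp at this
    simp only at ih
    obtain ⟨i1, i2, i3⟩ := ih
    have n1 := evN_cons m R
    have n2 := reN_cons m' R'
    rcases Nat.mod_two_eq_zero_or_one m with hm | hm <;> cases b <;>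
      simp [pstep, hm, -Multiset.count_eq_zero] <;> grind

theorem stmt_0 (n j : ℕ) (hn : 1 ≤ n) : FO j n = FD j n := by
  obtain ⟨k, rfl⟩ : ∃ k, n = k + 1 := ⟨n - 1, by omega⟩
  unfold FO FD
  rw [rP_eq cO, rP_eq cD]
  congr 1
  ext w
  have key : evN ((pdec cO w).1 ::ₘ (pdec cO w).2) = reN ((pdec cD w).1 ::ₘ (pdec cD w).2) := by
    obtain ⟨i1, i2, i3⟩ := invariant w
    rw [evN_cons, reN_cons, i1]
    simp only [i3]
  unfold evN reN at key
  simp only [Set.mem_setOf_eq, key]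
end

section
/- Let (a_i)_{i≥0} and (b_i)_{i≥0} be strictly increasing sequences of positive integers with a_i ≥ b_i for all i ≥ 0, and set S = {a_0, a_1, a_2, …} and T = {b_0, b_1, b_2, …}. Then for every integer n ≥ 1, r_S(n) ≤ r_T(n). -/
open Multiset Finset Filter

lemma aux_sup_mem (N : Multiset ℕ) (h : N ≠ 0) : N.sup ∈ N := by
  induction N using Multiset.induction_on with
  | empty => exact absurd rfl h
  | cons x s ih =>
    rw [Multiset.sup_cons]
    by_cases hs : s = 0
    · subst hs; simp
    · have := ih hs
      rcases le_total x s.sup with h1 | h1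
      · rw [sup_eq_right.mpr h1]; exact Multiset.mem_cons_of_mem this
      · rw [sup_eq_left.mpr h1]; exact Multiset.mem_cons_self _ _

lemma aux_sup_map (a : ℕ → ℕ) (ha : StrictMono a) (N : Multiset ℕ) (h : N ≠ 0) :
    (N.map a).sup = a N.sup := by
  apply le_antisymm
  · rw [Multiset.sup_le]
    intro y hy
    obtain ⟨x, hx, rfl⟩ := Multiset.mem_map.1 hy
    exact ha.monotone (Multiset.le_sup hx)
  · exact Multiset.le_sup (Multiset.mem_map_of_mem a (aux_sup_mem N h))

/-- Index multisets corresponding to partitions of perimeter `n`. -/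
def auxSet (a : ℕ → ℕ) (n : ℕ) : Set (Multiset ℕ) :=
  {N | N ≠ 0 ∧ a N.sup + Multiset.card N - 1 = n}

lemma aux_rP (a : ℕ → ℕ) (ha : StrictMono a) (hapos : ∀ i, 0 < a i) (n : ℕ) :
    rP n (fun M => ∀ x ∈ M, x ∈ Set.range a) = (auxSet a n).ncard := by
  unfold rP
  rw [← Set.ncard_image_of_injective (auxSet a n) (Multiset.map_injective ha.injective)]
  congr 1
  ext M
  constructor
  · rintro ⟨⟨h0, -⟩, hp, hr⟩
    have hM : (M.map (Function.invFun a)).map a = M := by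
      rw [Multiset.map_map]
      conv_rhs => rw [← Multiset.map_id M]
      exact Multiset.map_congr rfl fun x hx => Function.invFun_eq (hr x hx)
    refine ⟨M.map (Function.invFun a), ⟨by simpa using h0, ?_⟩, hM⟩
    rw [← aux_sup_map a ha _ (by simpa using h0), hM, Multiset.card_map]
    exact hp
  · rintro ⟨N, ⟨h0, hp⟩, rfl⟩
    refine ⟨⟨by simpa using h0, ?_⟩, ?_, ?_⟩
    · intro x hx
      obtain ⟨i, -, rfl⟩ := Multiset.mem_map.1 hx
      exact hapos i
    · unfold perim
      rw [aux_sup_map a ha N h0, Multiset.card_map]; exact hp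
    · intro x hx
      obtain ⟨i, -, rfl⟩ := Multiset.mem_map.1 hx
      exact ⟨i, rfl⟩

lemma aux_finite (a : ℕ → ℕ) (ha : StrictMono a) (hapos : ∀ i, 0 < a i) (n : ℕ) :
    (auxSet a n).Finite := by
  apply (Set.finite_Iic ((n + 1) • Multiset.range (n + 1))).subset
  rintro N ⟨h0, hp⟩
  have h1 := ha.id_le N.sup
  have h2 := hapos N.sup
  have h3 := Multiset.card_pos.2 h0
  simp only [id] at h1
  rw [Set.mem_Iic, Multiset.le_iff_count]
  intro x
  by_cases hx : x ∈ N
  · have h4 := Multiset.le_sup hx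
    have h5 := Multiset.count_le_card x N
    have h6 : Multiset.count x (Multiset.range (n + 1)) = 1 :=
      Multiset.count_eq_one_of_mem (Multiset.nodup_range _) (Multiset.mem_range.2 (by omega))
    rw [Multiset.count_nsmul, h6]
    omega
  · rw [Multiset.count_eq_zero_of_notMem hx]; exact Nat.zero_le _

lemma aux_sup_add (N : Multiset ℕ) (k : ℕ) : (N + Multiset.replicate k N.sup).sup = N.sup := by
  rw [Multiset.sup_add]
  apply sup_eq_left.2
  rw [Multiset.sup_le]
  intro y hy
  exact (Multiset.eq_of_mem_replicate hy).le

theorem stmt_2 (a b : ℕ → ℕ) (ha : StrictMono a) (hb : StrictMono b)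
    (hapos : ∀ i, 0 < a i) (hbpos : ∀ i, 0 < b i)
    (hab : ∀ i, b i ≤ a i) (n : ℕ) (hn : 1 ≤ n) :
    rP n (fun M => ∀ x ∈ M, x ∈ Set.range a) ≤
      rP n (fun M => ∀ x ∈ M, x ∈ Set.range b) := by
  rw [aux_rP a ha hapos, aux_rP b hb hbpos]
  refine Set.ncard_le_ncard_of_injOn
    (fun N => N + Multiset.replicate (a N.sup - b N.sup) N.sup) ?_ ?_ (aux_finite b hb hbpos n)
  · rintro N ⟨h0, hp⟩
    refine ⟨fun h => h0 (by simpa using (add_eq_zero.1 h).1), ?_⟩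
    simp only [aux_sup_add, Multiset.card_add, Multiset.card_replicate]
    have := hab N.sup
    omega
  · intro N _ N' _ h
    have h' : N + Multiset.replicate (a N.sup - b N.sup) N.sup
      = N' + Multiset.replicate (a N'.sup - b N'.sup) N'.sup := h
    have hs := congrArg Multiset.sup h'
    rw [aux_sup_add, aux_sup_add] at hs
    rw [hs] at h'
    exact add_right_cancel h'
end

section
/- For positive integers d, n and 1 ≤ a ≤ d+1, E(f_d^{(a)}(n), h_d^{(a)}(n)) = ∑_{m=1}^{n−1} f_d^{(a)}(n−m)·(f_d^{(1)}(m) − f_d^{(d+1)}(m)); that is, the excess of the total number of parts over all partitions counted by f_d^{(a)}(n) over the total number of parts over all partitions counted by h_d^{(a)}(n) equals ∑_{m=1}^{n−1} f_d^{(a)}(n−m) f_d^{(1)}(m) − ∑_{m=1}^{n−1} f_d^{(a)}(n−m) f_d^{(d+1)}(m). -/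
open Multiset Finset Filter

/-- `fP d a n`: partitions of perimeter n with every part ≡ a (mod d+1). -/
noncomputable def fP (d a n : ℕ) : ℕ :=
  rP n (fun M => ∀ x ∈ M, x % (d + 1) = a % (d + 1))

/-- `hP d a n`: partitions of perimeter n with d-distinct parts, all parts ≥ a. -/
noncomputable def hP (d a n : ℕ) : ℕ :=
  rP n (fun M => M.Nodup ∧ (∀ x ∈ M, a ≤ x) ∧
    ∀ x ∈ M, ∀ y ∈ M, x ≠ y → d ≤ max x y - min x y)

/-- The set of partitions counted by `fP d a n`. -/
def fSet (d a n : ℕ) : Set (Multiset ℕ) :=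
  {M | IsPartition M ∧ perim M = n ∧ ∀ x ∈ M, x % (d + 1) = a % (d + 1)}

/-- The set of partitions counted by `hP d a n`. -/
def hSet (d a n : ℕ) : Set (Multiset ℕ) :=
  {M | IsPartition M ∧ perim M = n ∧ M.Nodup ∧ (∀ x ∈ M, a ≤ x) ∧
    ∀ x ∈ M, ∀ y ∈ M, x ≠ y → d ≤ max x y - min x y}

/-- The excess of the total number of parts over partitions counted by `fP d a n`
over the total number of parts over partitions counted by `hP d a n`. -/
noncomputable def Efh (d a n : ℕ) : ℤ :=
  (∑ᶠ M ∈ fSet d a n, (Multiset.card M : ℤ)) - ∑ᶠ M ∈ hSet d a n, (Multiset.card M : ℤ)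

namespace Perim

lemma exists_top {M : Multiset ℕ} (h : M ≠ 0) :
    ∃ t R, M = t ::ₘ R ∧ ∀ x ∈ R, x ≤ t := by
  have hmem : M.sup ∈ M := by
    induction M using Multiset.induction_on with
    | empty => exact absurd rfl h
    | cons b s ih =>
      by_cases hs : s = 0
      · subst hs; simp
      · have := ih hs
        rw [Multiset.sup_cons]
        rcases le_total b s.sup with hb | hb
        · rw [sup_eq_right.2 hb]; exact Multiset.mem_cons_of_mem this
        · rw [sup_eq_left.2 hb]; exact Multiset.mem_cons_self _ _
  refine ⟨M.sup, M.erase M.sup, (Multiset.cons_erase hmem).symm, ?_⟩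
  intro x hx
  exact Multiset.le_sup (Multiset.mem_of_mem_erase hx)

lemma sup_top {t : ℕ} {R : Multiset ℕ} (h : ∀ x ∈ R, x ≤ t) : (t ::ₘ R).sup = t := by
  rw [Multiset.sup_cons]
  exact sup_eq_left.2 (Multiset.sup_le.2 h)

/-- Raise the largest part by `c`. -/
def q (c : ℕ) (M : Multiset ℕ) : Multiset ℕ := (M.sup + c) ::ₘ M.erase M.sup

/-- Add a new part exceeding the largest part by `c`. -/
def r (c : ℕ) (M : Multiset ℕ) : Multiset ℕ := (M.sup + c) ::ₘ M

lemma q_top {t c : ℕ} {R : Multiset ℕ} (h : ∀ x ∈ R, x ≤ t) : q c (t ::ₘ R) = (t + c) ::ₘ R := by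
  simp [q, sup_top h]

lemma r_top {t c : ℕ} {R : Multiset ℕ} (h : ∀ x ∈ R, x ≤ t) :
    r c (t ::ₘ R) = (t + c) ::ₘ t ::ₘ R := by
  simp [r, sup_top h]

lemma top_inj {t t' : ℕ} {R R' : Multiset ℕ} (h : ∀ x ∈ R, x ≤ t) (h' : ∀ x ∈ R', x ≤ t')
    (e : t ::ₘ R = t' ::ₘ R') : t = t' ∧ R = R' := by
  have h1 : t = t' := by rw [← sup_top h, ← sup_top h', e]
  subst h1
  exact ⟨rfl, (Multiset.cons_inj_right t).1 e⟩

lemma le_cons {t c : ℕ} {R : Multiset ℕ} (h : ∀ x ∈ R, x ≤ t) : ∀ x ∈ t ::ₘ R, x ≤ t + c := by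
  intro x hx
  rcases Multiset.mem_cons.1 hx with rfl | hx
  · omega
  · have := h x hx; omega

lemma le_add {t c : ℕ} {R : Multiset ℕ} (h : ∀ x ∈ R, x ≤ t) : ∀ x ∈ R, x ≤ t + c := by
  intro x hx
  have := h x hx; omega

lemma q_inj (c : ℕ) : Set.InjOn (q c) {M | M ≠ 0} := by
  intro M hM N hN e
  obtain ⟨t, R, rfl, h⟩ := exists_top hM
  obtain ⟨t', R', rfl, h'⟩ := exists_top hN
  rw [q_top h, q_top h'] at e
  obtain ⟨e1, rfl⟩ := top_inj (le_add h) (le_add h') e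
  have : t = t' := by omega
  rw [this]

lemma r_inj (c : ℕ) : Set.InjOn (r c) {M | M ≠ 0} := by
  intro M hM N hN e
  obtain ⟨t, R, rfl, h⟩ := exists_top hM
  obtain ⟨t', R', rfl, h'⟩ := exists_top hN
  rw [r_top h, r_top h'] at e
  exact (top_inj (le_cons h) (le_cons h') e).2

lemma card_q (c : ℕ) {M : Multiset ℕ} (hM : M ≠ 0) : Multiset.card (q c M) = Multiset.card M := by
  obtain ⟨t, R, rfl, h⟩ := exists_top hM
  rw [q_top h]; simp

lemma card_r (c : ℕ) (M : Multiset ℕ) : Multiset.card (r c M) = Multiset.card M + 1 := by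
  simp [r]

lemma mem_f {d a n t : ℕ} {R : Multiset ℕ} (h : ∀ x ∈ R, x ≤ t) :
    t ::ₘ R ∈ fSet d a n ↔ (0 < t ∧ ∀ x ∈ R, 0 < x) ∧ t + Multiset.card R = n ∧
      t % (d + 1) = a % (d + 1) ∧ ∀ x ∈ R, x % (d + 1) = a % (d + 1) := by
  simp only [fSet, Set.mem_ofPred_eq, IsPartition, perim, sup_top h, Multiset.card_cons,
    Multiset.forall_mem_cons]
  simp [← add_assoc]

lemma mem_h {d a n t : ℕ} {R : Multiset ℕ} (hd : 1 ≤ d) (h : ∀ x ∈ R, x ≤ t) :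
    t ::ₘ R ∈ hSet d a n ↔ (0 < t ∧ ∀ x ∈ R, 0 < x) ∧ t + Multiset.card R = n ∧
      R.Nodup ∧ (a ≤ t ∧ ∀ x ∈ R, a ≤ x) ∧ (∀ x ∈ R, x + d ≤ t) ∧
      ∀ x ∈ R, ∀ y ∈ R, x ≠ y → d ≤ max x y - min x y := by
  simp only [hSet, Set.mem_ofPred_eq, IsPartition, perim, sup_top h, Multiset.card_cons,
    Multiset.forall_mem_cons, Multiset.nodup_cons]
  constructor
  · rintro ⟨⟨-, h1⟩, h2, ⟨h3, h4⟩, h5, ⟨-, h6⟩, h7⟩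
    refine ⟨h1, by omega, h4, h5, ?_, fun x hx => (h7 x hx).2⟩
    intro x hx
    have h8 := h x hx
    have h9 : t ≠ x := by rintro rfl; exact h3 hx
    have := h6 x hx h9
    rw [max_eq_left h8, min_eq_right h8] at this
    omega
  · rintro ⟨h1, h2, h3, h4, h5, h6⟩
    refine ⟨⟨by simp, h1⟩, by omega, ⟨?_, h3⟩, h4, ⟨by simp, ?_⟩, ?_⟩
    · intro ht; have := h5 t ht; omega
    · intro x hx _
      have := h5 x hx
      rw [max_eq_left (h x hx), min_eq_right (h x hx)]; omega
    · intro x hx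
      refine ⟨fun _ => ?_, h6 x hx⟩
      have := h5 x hx
      rw [max_eq_right (h x hx), min_eq_left (h x hx)]; omega

lemma f_ne {d a n : ℕ} : fSet d a n ⊆ {M | M ≠ 0} := fun _ h => h.1.1
lemma h_ne {d a n : ℕ} : hSet d a n ⊆ {M | M ≠ 0} := fun _ h => h.1.1

/-- The exceptional singleton. -/
def single (a n : ℕ) : Set (Multiset ℕ) := {M | M = {a} ∧ n = a}

lemma f_rec {d a n : ℕ} (ha1 : 1 ≤ a) (ha2 : a ≤ d + 1) :
    fSet d a n = (r 0 '' fSet d a (n - 1) ∪ q (d + 1) '' fSet d a (n - (d + 1))) ∪ single a n := by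
  ext M
  constructor
  · intro hM
    obtain ⟨t, R, rfl, h⟩ := exists_top (f_ne hM)
    obtain ⟨⟨h1, h2⟩, h3, h4, h5⟩ := (mem_f h).1 hM
    by_cases ht : t ∈ R
    · left; left
      obtain ⟨S, rfl⟩ := Multiset.exists_cons_of_mem ht
      have hS : ∀ x ∈ S, x ≤ t := fun x hx => h x (Multiset.mem_cons_of_mem hx)
      refine ⟨t ::ₘ S, ?_, by rw [r_top hS]; rfl⟩
      rw [mem_f hS]
      rw [Multiset.card_cons] at h3
      exact ⟨⟨h1, fun x hx => h2 x (Multiset.mem_cons_of_mem hx)⟩, by omega, h4,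
        fun x hx => h5 x (Multiset.mem_cons_of_mem hx)⟩
    · have key : ∀ x, x < t → x % (d + 1) = a % (d + 1) → x + (d + 1) ≤ t := by
        intro x hx hxa
        have h6 : x ≡ t [MOD (d + 1)] := hxa.trans h4.symm
        have h7 := (Nat.modEq_iff_dvd' hx.le).1 h6
        have := Nat.le_of_dvd (by omega) h7
        omega
      have hlt : ∀ x ∈ R, x + (d + 1) ≤ t := fun x hx =>
        key x (lt_of_le_of_ne (h x hx) (by rintro rfl; exact ht hx)) (h5 x hx)
      by_cases hta : d + 1 < t
      · left; right
        have hR : ∀ x ∈ R, x ≤ t - (d + 1) := fun x hx => by have := hlt x hx; omega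
        refine ⟨(t - (d + 1)) ::ₘ R, ?_, by rw [q_top hR, Nat.sub_add_cancel hta.le]⟩
        rw [mem_f hR]
        refine ⟨⟨by omega, h2⟩, by omega, ?_, h5⟩
        rw [← h4, Nat.mod_eq_sub_mod hta.le]
      · right
        have hR : R = 0 := by
          apply Multiset.eq_zero_of_forall_notMem
          intro x hx
          have := hlt x hx
          have := h2 x hx
          omega
        subst hR
        have : t = a := by
          rcases lt_trichotomy t a with hl | hl | hl
          · have h6 : t ≡ a [MOD (d + 1)] := h4
            have h7 := (Nat.modEq_iff_dvd' hl.le).1 h6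
            have := Nat.le_of_dvd (by omega) h7
            omega
          · exact hl
          · have := key a hl rfl
            omega
        subst this
        exact ⟨rfl, by simpa using h3.symm⟩
  · rintro ((⟨N, hN, rfl⟩ | ⟨N, hN, rfl⟩) | ⟨rfl, rfl⟩)
    · obtain ⟨t, R, rfl, h⟩ := exists_top (f_ne hN)
      obtain ⟨⟨h1, h2⟩, h3, h4, h5⟩ := (mem_f h).1 hN
      rw [r_top h, mem_f (le_cons h)]
      simp only [Multiset.forall_mem_cons, Multiset.card_cons]
      exact ⟨⟨h1, h1, h2⟩, by omega, h4, h4, h5⟩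
    · obtain ⟨t, R, rfl, h⟩ := exists_top (f_ne hN)
      obtain ⟨⟨h1, h2⟩, h3, h4, h5⟩ := (mem_f h).1 hN
      rw [q_top h, mem_f (le_add h)]
      exact ⟨⟨by omega, h2⟩, by omega, by simpa using h4, h5⟩
    · have := mem_f (d := d) (a := n) (n := n) (t := n) (R := 0) (by simp)
      exact this.2 ⟨⟨by omega, by simp⟩, by simp, rfl, by simp⟩

lemma h_rec {d a n : ℕ} (hd : 1 ≤ d) (ha1 : 1 ≤ a) :
    hSet d a n = (q 1 '' hSet d a (n - 1) ∪ r d '' hSet d a (n - (d + 1))) ∪ single a n := by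
  ext M
  constructor
  · intro hM
    obtain ⟨t, R, rfl, h⟩ := exists_top (h_ne hM)
    obtain ⟨⟨h1, h2⟩, h3, h4, ⟨h5, h6⟩, h7, h8⟩ := (mem_h hd h).1 hM
    by_cases hR : R = 0
    · subst hR
      by_cases hta : t = a
      · subst hta
        right; exact ⟨rfl, by simpa using h3.symm⟩
      · left; left
        have h0 : ∀ x ∈ (0 : Multiset ℕ), x ≤ t - 1 := by simp
        refine ⟨(t - 1) ::ₘ 0, ?_, by rw [q_top h0, Nat.sub_add_cancel h1]⟩
        rw [mem_h hd h0]
        refine ⟨⟨by omega, by simp⟩, by omega, by simp, ⟨by omega, by simp⟩, by simp, by simp⟩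
    · obtain ⟨s, S, rfl, hS⟩ := exists_top hR
      have hst := h7 s (Multiset.mem_cons_self _ _)
      have hs0 := h2 s (Multiset.mem_cons_self _ _)
      have hsa := h6 s (Multiset.mem_cons_self _ _)
      have hle : ∀ x ∈ s ::ₘ S, x ≤ s := by simpa using hS
      by_cases he : s + d = t
      · left; right
        refine ⟨s ::ₘ S, ?_, by rw [r_top hS, he]⟩
        rw [mem_h hd hS]
        rw [Multiset.card_cons] at h3
        have hsup : s ∉ S := (Multiset.nodup_cons.1 h4).1
        refine ⟨⟨hs0, fun x hx => h2 x (Multiset.mem_cons_of_mem hx)⟩, by omega,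
          (Multiset.nodup_cons.1 h4).2, ⟨hsa, fun x hx => h6 x (Multiset.mem_cons_of_mem hx)⟩,
          ?_, fun x hx y hy => h8 x (Multiset.mem_cons_of_mem hx) y (Multiset.mem_cons_of_mem hy)⟩
        intro x hx
        have := h8 s (Multiset.mem_cons_self _ _) x (Multiset.mem_cons_of_mem hx)
          (by rintro rfl; exact hsup hx)
        have h9 := hS x hx
        rw [max_eq_left h9, min_eq_right h9] at this
        omega
      · left; left
        have h0 : ∀ x ∈ s ::ₘ S, x ≤ t - 1 := fun x hx => by have := hle x hx; omega
        refine ⟨(t - 1) ::ₘ s ::ₘ S, ?_, by rw [q_top h0, Nat.sub_add_cancel h1]⟩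
        rw [mem_h hd h0]
        refine ⟨⟨by omega, h2⟩, by omega, h4, ⟨by omega, h6⟩, ?_, h8⟩
        intro x hx
        have := hle x hx
        omega
  · rintro ((⟨N, hN, rfl⟩ | ⟨N, hN, rfl⟩) | ⟨rfl, rfl⟩)
    · obtain ⟨t, R, rfl, h⟩ := exists_top (h_ne hN)
      obtain ⟨⟨h1, h2⟩, h3, h4, ⟨h5, h6⟩, h7, h8⟩ := (mem_h hd h).1 hN
      rw [q_top h, mem_h hd (le_add h)]
      exact ⟨⟨by omega, h2⟩, by omega, h4, ⟨by omega, h6⟩,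
        fun x hx => by have := h7 x hx; omega, h8⟩
    · have hN' := hN
      obtain ⟨t, R, rfl, h⟩ := exists_top (h_ne hN)
      obtain ⟨⟨h1, h2⟩, h3, h4, ⟨h5, h6⟩, h7, h8⟩ := (mem_h hd h).1 hN
      rw [r_top h, mem_h hd (le_cons h)]
      refine ⟨⟨by omega, by simpa using ⟨h1, h2⟩⟩, by rw [Multiset.card_cons]; omega, hN'.2.2.1,
        ⟨by omega, by simpa using ⟨h5, h6⟩⟩, ?_, hN'.2.2.2.2⟩
      intro x hx
      have := le_cons (c := 0) h x hx
      omega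
    · have := mem_h (d := d) (a := n) (n := n) (t := n) (R := 0) hd (by simp)
      exact this.2 ⟨⟨by omega, by simp⟩, by simp, by simp, ⟨le_rfl, by simp⟩, by simp, by simp⟩

lemma f_zero (d a : ℕ) : fSet d a 0 = ∅ := by
  ext M
  simp only [Set.mem_empty_iff_false, iff_false]
  intro hM
  obtain ⟨t, R, rfl, h⟩ := exists_top (f_ne hM)
  have := (mem_f h).1 hM
  omega

lemma h_zero {d : ℕ} (hd : 1 ≤ d) (a : ℕ) : hSet d a 0 = ∅ := by
  ext M
  simp only [Set.mem_empty_iff_false, iff_false]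
  intro hM
  obtain ⟨t, R, rfl, h⟩ := exists_top (h_ne hM)
  have := (mem_h hd h).1 hM
  omega

lemma single_fin (a n : ℕ) : (single a n).Finite :=
  (Set.finite_singleton ({a} : Multiset ℕ)).subset fun _ h => h.1

lemma f_fin {d a : ℕ} (ha1 : 1 ≤ a) (ha2 : a ≤ d + 1) (n : ℕ) : (fSet d a n).Finite := by
  induction n using Nat.strong_induction_on with
  | _ n ih =>
    rcases Nat.eq_zero_or_pos n with rfl | hn
    · rw [f_zero]; exact Set.finite_empty
    · rw [f_rec ha1 ha2]
      exact (((ih _ (by omega)).image _).union ((ih _ (by omega)).image _)).union (single_fin a n)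

lemma h_fin {d a : ℕ} (hd : 1 ≤ d) (ha1 : 1 ≤ a) (n : ℕ) : (hSet d a n).Finite := by
  induction n using Nat.strong_induction_on with
  | _ n ih =>
    rcases Nat.eq_zero_or_pos n with rfl | hn
    · rw [h_zero hd]; exact Set.finite_empty
    · rw [h_rec hd ha1]
      exact (((ih _ (by omega)).image _).union ((ih _ (by omega)).image _)).union (single_fin a n)

/-- Weighted sum over a set of partitions. -/
noncomputable def W (w : ℕ → ℤ) (S : Set (Multiset ℕ)) : ℤ := ∑ᶠ M ∈ S, w (Multiset.card M)

lemma W_single (w : ℕ → ℤ) (a n : ℕ) : W w (single a n) = if n = a then w 1 else 0 := by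
  unfold W single
  split_ifs with h
  · simp [h]
  · simp [h]

lemma W_rec {A B : Set (Multiset ℕ)} {c c' a n : ℕ} (hA : A.Finite) (hB : B.Finite)
    (hA0 : A ⊆ {M | M ≠ 0}) (hB0 : B ⊆ {M | M ≠ 0})
    (h1 : Disjoint (r c '' A) (q c' '' B))
    (h2 : Disjoint (r c '' A ∪ q c' '' B) (single a n)) (w : ℕ → ℤ) :
    W w (r c '' A ∪ q c' '' B ∪ single a n) =
      W (fun k => w (k + 1)) A + W w B + if n = a then w 1 else 0 := by
  rw [← W_single]
  unfold W
  rw [finsum_mem_union h2 ((hA.image _).union (hB.image _)) (single_fin a n),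
    finsum_mem_union h1 (hA.image _) (hB.image _),
    finsum_mem_image ((r_inj c).mono hA0), finsum_mem_image ((q_inj c').mono hB0)]
  congr 2
  · exact finsum_mem_congr rfl fun M hM => by rw [card_r]
  · exact finsum_mem_congr rfl fun M hM => by rw [card_q c' (hB0 hM)]

lemma Wf_rec {d a : ℕ} (ha1 : 1 ≤ a) (ha2 : a ≤ d + 1) (n : ℕ) (w : ℕ → ℤ) :
    W w (fSet d a n) = W (fun k => w (k + 1)) (fSet d a (n - 1)) + W w (fSet d a (n - (d + 1)))
      + if n = a then w 1 else 0 := by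
  rw [← W_rec (c := 0) (c' := d + 1) (f_fin ha1 ha2 _) (f_fin ha1 ha2 _) f_ne f_ne, ← f_rec ha1 ha2]
  · rw [Set.disjoint_left]
    rintro _ ⟨M, hM, rfl⟩ ⟨N, hN, e⟩
    obtain ⟨t, R, rfl, h⟩ := exists_top (f_ne hM)
    obtain ⟨s, S, rfl, h'⟩ := exists_top (f_ne hN)
    rw [r_top h, q_top h'] at e
    obtain ⟨e1, rfl⟩ := top_inj (le_add h') (le_cons h) e
    have := h' t (Multiset.mem_cons_self _ _)
    omega
  · rw [Set.disjoint_left]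
    rintro _ (⟨M, hM, rfl⟩ | ⟨M, hM, rfl⟩) ⟨e, rfl⟩
    · have e2 := congrArg Multiset.card e
      rw [card_r] at e2
      have := Multiset.card_pos.2 (f_ne hM)
      simp at e2
      exact f_ne hM e2
    · obtain ⟨t, R, rfl, h⟩ := exists_top (f_ne hM)
      obtain ⟨⟨h1, h2⟩, h3, h4, h5⟩ := (mem_f h).1 hM
      omega

lemma Wh_rec {d a : ℕ} (hd : 1 ≤ d) (ha1 : 1 ≤ a) (n : ℕ) (w : ℕ → ℤ) :
    W w (hSet d a n) = W (fun k => w (k + 1)) (hSet d a (n - (d + 1))) + W w (hSet d a (n - 1))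
      + if n = a then w 1 else 0 := by
  rw [← W_rec (c := d) (c' := 1) (h_fin hd ha1 _) (h_fin hd ha1 _) h_ne h_ne,
    Set.union_comm (r d '' _), ← h_rec hd ha1]
  · rw [Set.disjoint_left]
    rintro _ ⟨M, hM, rfl⟩ ⟨N, hN, e⟩
    obtain ⟨t, R, rfl, h⟩ := exists_top (h_ne hM)
    obtain ⟨s, S, rfl, h'⟩ := exists_top (h_ne hN)
    have h7 := ((mem_h hd h').1 hN).2.2.2.2.1
    rw [r_top h, q_top h'] at e
    obtain ⟨e1, rfl⟩ := top_inj (le_add h') (le_cons h) e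
    have := h7 t (Multiset.mem_cons_self _ _)
    omega
  · rw [Set.disjoint_left]
    rintro _ (⟨M, hM, rfl⟩ | ⟨M, hM, rfl⟩) ⟨e, rfl⟩
    · have e2 := congrArg Multiset.card e
      rw [card_r] at e2
      simp at e2
      exact h_ne hM e2
    · obtain ⟨t, R, rfl, h⟩ := exists_top (h_ne hM)
      obtain ⟨⟨h1, h2⟩, h3, h4, ⟨h5, h6⟩, h7, h8⟩ := (mem_h hd h).1 hM
      omega

lemma W_empty (w : ℕ → ℤ) : W w ∅ = 0 := by simp [W]

lemma W_add {S : Set (Multiset ℕ)} (hS : S.Finite) :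
    W (fun k => ((k + 1 : ℕ) : ℤ)) S = W (fun k => (k : ℤ)) S + W (fun _ => 1) S := by
  unfold W
  rw [← finsum_mem_add_distrib hS]
  exact finsum_mem_congr rfl fun M hM => by push_cast; rfl

lemma W_one {S : Set (Multiset ℕ)} (hS : S.Finite) : W (fun _ => 1) S = (S.ncard : ℤ) := by
  unfold W
  rw [finsum_mem_eq_finite_toFinset_sum _ hS, Set.ncard_eq_toFinset_card _ hS]
  simp

/-- Power series of a sequence vanishing at zero, shifted. -/
lemma X_mul_mk (u : ℕ → ℤ) (hu : u 0 = 0) (k : ℕ) :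
    (PowerSeries.X : PowerSeries ℤ) ^ k * PowerSeries.mk u = PowerSeries.mk fun n => u (n - k) := by
  ext n
  rw [PowerSeries.coeff_X_pow_mul']
  simp only [PowerSeries.coeff_mk]
  split_ifs with h
  · rfl
  · rw [Nat.sub_eq_zero_of_le (by omega), hu]

lemma gf {k : ℕ} {u v : ℕ → ℤ} (hu : u 0 = 0)
    (h : ∀ n, u n = u (n - 1) + u (n - k) + v n) :
    (1 - PowerSeries.X - PowerSeries.X ^ k) * PowerSeries.mk u = PowerSeries.mk v := by
  have h1 := X_mul_mk u hu 1
  have h2 := X_mul_mk u hu k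
  rw [pow_one] at h1
  rw [sub_mul, sub_mul, one_mul, h1, h2]
  ext n
  simp only [map_sub, PowerSeries.coeff_mk]
  rw [h n]; ring

end Perim

open Perim in
theorem stmt_3 (d a n : ℕ) (hd : 1 ≤ d) (hn : 1 ≤ n) (ha1 : 1 ≤ a) (ha2 : a ≤ d + 1) :
    Efh d a n =
      (∑ m ∈ Finset.Icc 1 (n - 1), (fP d a (n - m) : ℤ) * (fP d 1 m : ℤ)) -
        ∑ m ∈ Finset.Icc 1 (n - 1), (fP d a (n - m) : ℤ) * (fP d (d + 1) m : ℤ) := by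
  have hF : ∀ b, 1 ≤ b → b ≤ d + 1 → ∀ n, (fP d b n : ℤ) = W (fun _ => 1) (fSet d b n) :=
    fun b h1 h2 n => (W_one (f_fin h1 h2 n)).symm
  have hF0 : ∀ b, W (fun _ => 1) (fSet d b 0) = 0 := fun b => by rw [f_zero, W_empty]
  have gF : ∀ b, 1 ≤ b → b ≤ d + 1 →
      (1 - PowerSeries.X - PowerSeries.X ^ (d + 1)) *
        PowerSeries.mk (fun n => W (fun _ => 1) (fSet d b n)) = PowerSeries.X ^ b := by
    intro b h1 h2
    rw [gf (v := fun n => if n = b then 1 else 0) (hF0 b)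
      (fun n => Wf_rec h1 h2 n _)]
    ext m
    rw [PowerSeries.coeff_X_pow, PowerSeries.coeff_mk]
  have hFH : ∀ n, W (fun _ => 1) (hSet d a n) = W (fun _ => 1) (fSet d a n) := by
    intro n
    induction n using Nat.strong_induction_on with
    | _ n ih =>
      rcases Nat.eq_zero_or_pos n with rfl | hn
      · rw [f_zero, h_zero hd]
      · rw [Wf_rec ha1 ha2, Wh_rec hd ha1, ih (n - 1) (by omega), ih (n - (d + 1)) (by omega)]
        ring
  have hE : ∀ n, Efh d a n = W (fun k => (k : ℤ)) (fSet d a n) - W (fun k => (k : ℤ)) (hSet d a n) :=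
    fun _ => rfl
  have hE0 : Efh d a 0 = 0 := by rw [hE, f_zero, h_zero hd, sub_self]
  have hErec : ∀ n, Efh d a n = Efh d a (n - 1) + Efh d a (n - (d + 1)) +
      (W (fun _ => 1) (fSet d a (n - 1)) - W (fun _ => 1) (fSet d a (n - (d + 1)))) := by
    intro n
    rw [hE, hE, hE, Wf_rec ha1 ha2 n, Wh_rec hd ha1 n, W_add (f_fin ha1 ha2 _),
      W_add (h_fin hd ha1 _), hFH]
    ring
  have gE := gf hE0 hErec
  set P : PowerSeries ℤ := 1 - PowerSeries.X - PowerSeries.X ^ (d + 1) with hP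
  set Fs : ℕ → PowerSeries ℤ := fun b => PowerSeries.mk (fun n => W (fun _ => 1) (fSet d b n))
    with hFs
  have gE' : P * PowerSeries.mk (fun n => Efh d a n) =
      (PowerSeries.X - PowerSeries.X ^ (d + 1)) * Fs a := by
    rw [gE, sub_mul, X_mul_mk (fun n => W (fun _ => 1) (fSet d a n)) (hF0 a)]
    have := X_mul_mk (fun n => W (fun _ => 1) (fSet d a n)) (hF0 a) 1
    rw [pow_one] at this
    rw [this]
    ext m
    simp
  have hP0 : P ≠ 0 := by
    intro h0
    have := congrArg (PowerSeries.constantCoeff) h0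
    simp [hP] at this
  have main : PowerSeries.mk (fun n => Efh d a n) = Fs a * Fs 1 - Fs a * Fs (d + 1) := by
    apply mul_left_cancel₀ hP0
    rw [gE', mul_sub, mul_left_comm, mul_left_comm P, gF 1 le_rfl (by omega),
      gF (d + 1) (by omega) le_rfl]
    ring
  have conv : ∀ b, 1 ≤ b → b ≤ d + 1 → PowerSeries.coeff n (Fs a * Fs b) =
      ∑ m ∈ Finset.Icc 1 (n - 1), (fP d a (n - m) : ℤ) * (fP d b m : ℤ) := by
    intro b h1 h2
    rw [mul_comm, PowerSeries.coeff_mul, Finset.Nat.sum_antidiagonal_eq_sum_range_succ_mk]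
    symm
    simp only [hF b h1 h2, hF a ha1 ha2, hFs, PowerSeries.coeff_mk]
    rw [Finset.sum_congr rfl fun _ _ => mul_comm _ _]
    apply Finset.sum_subset
    · intro m hm
      simp only [Finset.mem_Icc, Finset.mem_range] at *
      omega
    · intro m hm hm'
      simp only [Finset.mem_Icc, Finset.mem_range] at *
      have : m = 0 ∨ m = n := by omega
      rcases this with rfl | rfl
      · rw [hF0, zero_mul]
      · rw [Nat.sub_self, hF0, mul_zero]
  have := congrArg (PowerSeries.coeff n) main
  rw [map_sub, conv 1 le_rfl (by omega), conv (d + 1) (by omega) le_rfl,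
    PowerSeries.coeff_mk] at this
  exact this
end

section
/- For positive integers d, n and 1 ≤ a ≤ d+1, ∑_{m=1}^{n−1} f_d^{(a)}(n−m) f_d^{(1)}(m) ≥ ∑_{m=1}^{n−1} f_d^{(a)}(n−m) f_d^{(d+1)}(m). -/
open Multiset Finset Filter

lemma perim_finite (n : ℕ) (P : Multiset ℕ → Prop) :
    {M : Multiset ℕ | IsPartition M ∧ perim M = n ∧ P M}.Finite := by
  apply (Multiset.finite_toSet (Multiset.powerset ((n + 1) • Multiset.range (n + 2)))).subset
  rintro M ⟨⟨h0, hpos⟩, hp, -⟩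
  simp only [Set.mem_ofPred_eq, Multiset.mem_powerset]
  unfold perim at hp
  have hc : 0 < Multiset.card M := Multiset.card_pos.2 h0
  obtain ⟨y, hy⟩ := Multiset.exists_mem_of_ne_zero h0
  have h1 : 1 ≤ M.sup := le_trans (hpos y hy) (Multiset.le_sup hy)
  rw [Multiset.le_iff_count]
  intro x
  by_cases hx : x ∈ M
  · have hxs : x ≤ M.sup := Multiset.le_sup hx
    have h2 : Multiset.count x M ≤ Multiset.card M := Multiset.count_le_card x M
    have h3 : 1 ≤ Multiset.count x (Multiset.range (n + 2)) :=
      Multiset.one_le_count_iff_mem.2 (Multiset.mem_range.2 (by omega))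
    rw [Multiset.count_nsmul]
    have h4 : Multiset.card M ≤ n + 1 := by omega
    nlinarith
  · rw [Multiset.count_eq_zero_of_notMem hx]
    exact Nat.zero_le _

lemma fP_le (d m : ℕ) (hd : 1 ≤ d) : fP d (d + 1) m ≤ fP d 1 m := by
  unfold fP rP
  have key : ∀ M : Multiset ℕ, IsPartition M →
      (∀ x ∈ M, x % (d + 1) = (d + 1) % (d + 1)) → ∀ x ∈ M, d + 1 ≤ x := by
    intro M hM h x hx
    have h1 := h x hx
    rw [Nat.mod_self] at h1
    exact Nat.le_of_dvd (hM.2 x hx) (Nat.dvd_of_mod_eq_zero h1)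
  apply Set.ncard_le_ncard_of_injOn
    (fun M => M.map (fun x => x - d) + Multiset.replicate d 1) ?_ ?_ (perim_finite _ _)
  · rintro M ⟨hM, hp, hP⟩
    have hk := key M hM hP
    refine ⟨⟨?_, ?_⟩, ?_, ?_⟩
    · intro h
      have := congrArg Multiset.card h
      simp at this
      omega
    · intro x hx
      rw [Multiset.mem_add, Multiset.mem_map, Multiset.mem_replicate] at hx
      rcases hx with ⟨y, hy, rfl⟩ | ⟨_, rfl⟩
      · have := hk y hy
        omega
      · exact one_pos
    · obtain ⟨y, hy⟩ := Multiset.exists_mem_of_ne_zero hM.1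
      have hys : y ≤ M.sup := Multiset.le_sup hy
      have hyk := hk y hy
      have hs : (M.map (fun x => x - d) + Multiset.replicate d 1).sup = M.sup - d := by
        apply le_antisymm
        · rw [Multiset.sup_le]
          intro x hx
          rw [Multiset.mem_add, Multiset.mem_map, Multiset.mem_replicate] at hx
          rcases hx with ⟨z, hz, rfl⟩ | ⟨_, rfl⟩
          · have : z ≤ M.sup := Multiset.le_sup hz
            omega
          · omega
        · have : M.sup ≤ (M.map (fun x => x - d) + Multiset.replicate d 1).sup + d := by
            rw [Multiset.sup_le]
            intro z hz
            have : z - d ≤ (M.map (fun x => x - d) + Multiset.replicate d 1).sup :=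
              Multiset.le_sup (Multiset.mem_add.2 (Or.inl (Multiset.mem_map_of_mem _ hz)))
            omega
          omega
      unfold perim at hp ⊢
      rw [hs, Multiset.card_add, Multiset.card_map, Multiset.card_replicate]
      omega
    · intro x hx
      rw [Multiset.mem_add, Multiset.mem_map, Multiset.mem_replicate] at hx
      rcases hx with ⟨y, hy, rfl⟩ | ⟨_, rfl⟩
      · have h1 := hP y hy
        have h2 := hk y hy
        rw [Nat.mod_self] at h1
        obtain ⟨c, rfl⟩ := Nat.dvd_of_mod_eq_zero h1
        obtain _ | c := c
        · omega
        have : (d + 1) * (c + 1) - d = 1 + (d + 1) * c := by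
          rw [Nat.mul_succ]; omega
        rw [this, Nat.add_mul_mod_self_left]
      · rfl
  · rintro M ⟨hM, _, hP⟩ N ⟨hN, _, hQ⟩ h
    have hk := key M hM hP
    have hl := key N hN hQ
    have h' : M.map (fun x => x - d) = N.map (fun x => x - d) := add_right_cancel h
    have inv : ∀ K : Multiset ℕ, (∀ x ∈ K, d + 1 ≤ x) →
        (K.map (fun x => x - d)).map (fun x => x + d) = K := by
      intro K hK
      rw [Multiset.map_map]
      conv_rhs => rw [← Multiset.map_id K]
      apply Multiset.map_congr rfl
      intro x hx
      have := hK x hx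
      simp only [Function.comp_apply, id]
      omega
    rw [← inv M hk, ← inv N hl, h']

theorem stmt_4 (d a n : ℕ) (hd : 1 ≤ d) (hn : 1 ≤ n) (ha1 : 1 ≤ a) (ha2 : a ≤ d + 1) :
    ∑ m ∈ Finset.Icc 1 (n - 1), fP d a (n - m) * fP d (d + 1) m ≤
      ∑ m ∈ Finset.Icc 1 (n - 1), fP d a (n - m) * fP d 1 m := by 
  apply Finset.sum_le_sum
  intro m _
  exact Nat.mul_le_mul_left _ (fP_le d m hd)
end

section
/- Let d be a positive integer and let 0 < a_1 < b_1 ≤ d and 0 < a_2 < b_2 ≤ d be integers with a_1 ≤ a_2 and b_1 ≤ b_2, where these two inequalities are not both equalities. Then ℓ_d^{(a_1,b_1)}(n) − ℓ_d^{(a_2,b_2)}(n) tends to +∞ as n → ∞. -/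
open Multiset Finset Filter

/-- `ellP d a b n`: partitions of perimeter n with every part ≡ a or ≡ b (mod d). -/
noncomputable def ellP (d a b n : ℕ) : ℕ :=
  rP n (fun M => ∀ x ∈ M, x % d = a % d ∨ x % d = b % d)

/-- The `k`-th smallest positive integer congruent to `a` or `b` modulo `d`. -/
def pp (d a b k : ℕ) : ℕ := (if k % 2 = 0 then a else b) + (k / 2) * d

lemma pp_strictMono {d a b : ℕ} (ha : 0 < a) (hab : a < b) (hb : b ≤ d) :
    StrictMono (pp d a b) := by
  apply strictMono_nat_of_lt_succ
  intro k
  unfold pp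
  rcases Nat.even_or_odd' k with ⟨j, rfl | rfl⟩
  · have h1 : (2 * j) % 2 = 0 := by omega
    have h2 : ¬ (2 * j + 1) % 2 = 0 := by omega
    have h3 : (2 * j) / 2 = j := by omega
    have h4 : (2 * j + 1) / 2 = j := by omega
    rw [if_pos h1, if_neg h2, h3, h4]
    omega
  · have h1 : (2 * j + 1 + 1) % 2 = 0 := by omega
    have h2 : ¬ (2 * j + 1) % 2 = 0 := by omega
    have h3 : (2 * j + 1 + 1) / 2 = j + 1 := by omega
    have h4 : (2 * j + 1) / 2 = j := by omega
    rw [if_pos h1, if_neg h2, h3, h4, add_mul]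
    omega

lemma ex_of_mod {d a x : ℕ} (ha : 0 < a) (had : a ≤ d) (hx : 0 < x) (h : x % d = a % d) :
    ∃ j, x = a + j * d := by
  have hax : a ≤ x := by
    by_contra hlt
    push Not at hlt
    rw [Nat.mod_eq_of_lt (by omega : x < d)] at h
    rcases Nat.lt_or_eq_of_le had with h' | h'
    · rw [Nat.mod_eq_of_lt h'] at h; omega
    · rw [h', Nat.mod_self] at h; omega
  obtain ⟨j, hj⟩ := (Nat.modEq_iff_dvd' hax).1 (show a ≡ x [MOD d] from h.symm)
  exact ⟨j, by rw [mul_comm]; omega⟩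

lemma mem_pp {d a b : ℕ} (ha : 0 < a) (hab : a < b) (hb : b ≤ d) (x : ℕ) :
    (0 < x ∧ (x % d = a % d ∨ x % d = b % d)) ↔ ∃ k, pp d a b k = x := by
  constructor
  · rintro ⟨hx, h | h⟩
    · obtain ⟨j, rfl⟩ := ex_of_mod ha (by omega) hx h
      refine ⟨2 * j, ?_⟩
      unfold pp
      rw [if_pos (by omega), show 2 * j / 2 = j by omega]
    · obtain ⟨j, rfl⟩ := ex_of_mod (by omega) hb hx h
      refine ⟨2 * j + 1, ?_⟩
      unfold pp
      rw [if_neg (by omega), show (2 * j + 1) / 2 = j by omega]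
  · rintro ⟨k, rfl⟩
    unfold pp
    split_ifs
    · exact ⟨by omega, Or.inl (by simp)⟩
    · exact ⟨by omega, Or.inr (by simp)⟩

lemma sup_mem_ne {I : Multiset ℕ} (h : I ≠ 0) : I.sup ∈ I := by
  induction I using Multiset.induction with
  | empty => exact absurd rfl h
  | cons x s ih =>
    rw [Multiset.sup_cons]
    by_cases hs : s = 0
    · simp [hs]
    · rcases le_total x s.sup with h' | h'
      · rw [sup_eq_right.2 h']; exact Multiset.mem_cons_of_mem (ih hs)
      · rw [sup_eq_left.2 h']; exact Multiset.mem_cons_self _ _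

lemma sup_map_mono {p : ℕ → ℕ} (hp : Monotone p) {I : Multiset ℕ} (h : I ≠ 0) :
    (I.map p).sup = p I.sup := by
  apply le_antisymm
  · rw [Multiset.sup_le]
    intro y hy
    obtain ⟨x, hx, rfl⟩ := Multiset.mem_map.1 hy
    exact hp (Multiset.le_sup hx)
  · exact Multiset.le_sup (Multiset.mem_map_of_mem p (sup_mem_ne h))

/-- Index multisets. -/
def idx (d a b n : ℕ) : Set (Multiset ℕ) :=
  {I | I ≠ 0 ∧ pp d a b I.sup + Multiset.card I = n + 1}

lemma ellP_eq {d a b : ℕ} (ha : 0 < a) (hab : a < b) (hb : b ≤ d) (n : ℕ) :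
    ellP d a b n = (idx d a b n).ncard := by
  have hm := pp_strictMono ha hab hb
  rw [← Set.ncard_image_of_injective (idx d a b n) (Multiset.map_injective hm.injective)]
  unfold ellP rP
  congr 1
  ext M
  simp only [Set.mem_setOf_eq, Set.mem_image, idx, IsPartition, perim]
  constructor
  · rintro ⟨⟨h0, hpos⟩, hper, hmod⟩
    have : ∀ x ∈ M, ∃ k, pp d a b k = x := fun x hx =>
      (mem_pp ha hab hb x).1 ⟨hpos x hx, hmod x hx⟩
    obtain ⟨I, rfl⟩ : ∃ I : Multiset ℕ, I.map (pp d a b) = M := by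
      clear hper hmod hpos h0
      induction M using Multiset.induction with
      | empty => exact ⟨0, rfl⟩
      | cons x s ih =>
        obtain ⟨I, hI⟩ := ih (fun y hy => this y (Multiset.mem_cons_of_mem hy))
        obtain ⟨k, hk⟩ := this x (Multiset.mem_cons_self _ _)
        exact ⟨k ::ₘ I, by rw [Multiset.map_cons, hI, hk]⟩
    have hI0 : I ≠ 0 := by rintro rfl; exact h0 rfl
    have hc : 0 < Multiset.card I := Multiset.card_pos.2 hI0
    refine ⟨I, ⟨hI0, ?_⟩, rfl⟩
    rw [sup_map_mono hm.monotone hI0, Multiset.card_map] at hper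
    omega
  · rintro ⟨I, ⟨hI0, hI⟩, rfl⟩
    have key : ∀ x ∈ I.map (pp d a b), 0 < x ∧ (x % d = a % d ∨ x % d = b % d) := by
      intro x hx
      obtain ⟨k, _, hk⟩ := Multiset.mem_map.1 hx
      exact (mem_pp ha hab hb x).2 ⟨k, hk⟩
    refine ⟨⟨by simpa using hI0, fun x hx => (key x hx).1⟩, ?_, fun x hx => (key x hx).2⟩
    rw [sup_map_mono hm.monotone hI0, Multiset.card_map]
    omega

lemma idx_finite {d a b : ℕ} (ha : 0 < a) (hab : a < b) (hb : b ≤ d) (n : ℕ) :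
    (idx d a b n).Finite := by
  have hm := pp_strictMono ha hab hb
  apply (Set.finite_Iic ((n + 1) • Multiset.range (n + 2))).subset
  rintro I ⟨_, hI⟩
  rw [Set.mem_Iic, Multiset.le_iff_count]
  intro x
  by_cases hx : x ∈ I
  · have h1 : x ≤ I.sup := Multiset.le_sup hx
    have h2 := hm.id_le I.sup
    have h2' : I.sup ≤ pp d a b I.sup := h2
    have h3 := Multiset.count_le_card x I
    have h4 : x ∈ Multiset.range (n + 2) := Multiset.mem_range.2 (by omega)
    rw [Multiset.count_nsmul, Multiset.count_eq_one_of_mem (Multiset.nodup_range _) h4]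
    omega
  · rw [Multiset.count_eq_zero_of_notMem hx]; exact Nat.zero_le _

lemma sup_add_rep (I : Multiset ℕ) (t : ℕ) : (I + Multiset.replicate t 0).sup = I.sup := by
  rw [Multiset.sup_add]
  apply sup_eq_left.2
  rw [Multiset.sup_le]
  intro x hx
  rw [Multiset.eq_of_mem_replicate hx]
  exact Nat.zero_le _

lemma pp_le {d a₁ b₁ a₂ b₂ : ℕ} (haa : a₁ ≤ a₂) (hbb : b₁ ≤ b₂) (k : ℕ) :
    pp d a₁ b₁ k ≤ pp d a₂ b₂ k := by
  unfold pp
  split_ifs <;> omega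

lemma main_bound {d a₁ b₁ a₂ b₂ : ℕ}
    (ha₁ : 0 < a₁) (hab₁ : a₁ < b₁) (hb₁ : b₁ ≤ d)
    (haa : a₁ ≤ a₂) (hbb : b₁ ≤ b₂) (K : ℕ) (hK : 2 ≤ K)
    (hlt : pp d a₁ b₁ K < pp d a₂ b₂ K) (n : ℕ) :
    (idx d a₂ b₂ n).ncard + (n + 1 - pp d a₁ b₁ K) ≤ (idx d a₁ b₁ n).ncard := by
  set N := n + 1 - pp d a₁ b₁ K with hN
  set f : Multiset ℕ → Multiset ℕ := fun I =>
    I + Multiset.replicate (pp d a₂ b₂ I.sup - pp d a₁ b₁ I.sup) 0 with hf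
  set g : ℕ → Multiset ℕ := fun t =>
    Multiset.replicate t 1 + Multiset.replicate (N - t) K with hg
  have hfin := idx_finite ha₁ hab₁ hb₁ n
  have hfinj : Function.Injective f := by
    intro I J h
    have hs : I.sup = J.sup := by
      have := congrArg Multiset.sup h
      simpa only [hf, sup_add_rep] using this
    simp only [hf, hs] at h
    exact add_right_cancel h
  have hginj : Function.Injective g := by
    intro s t h
    have := congrArg (Multiset.count 1) h
    simp only [hg, Multiset.count_add, Multiset.count_replicate] at this
    have hK1 : K ≠ 1 := by omega
    simpa [hK1] using this
  have hgsup : ∀ t < N, (g t).sup = K := by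
    intro t ht
    apply le_antisymm
    · rw [Multiset.sup_le]
      intro x hx
      rcases Multiset.mem_add.1 hx with h | h
      · rw [Multiset.eq_of_mem_replicate h]; omega
      · rw [Multiset.eq_of_mem_replicate h]
    · apply Multiset.le_sup
      apply Multiset.mem_add.2 (Or.inr _)
      exact Multiset.mem_replicate.2 ⟨by omega, rfl⟩
  have hfS : f '' idx d a₂ b₂ n ⊆ idx d a₁ b₁ n := by
    rintro _ ⟨I, ⟨h0, hI⟩, rfl⟩
    have := pp_le (d := d) haa hbb I.sup
    refine ⟨?_, ?_⟩
    · intro h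
      exact h0 (Multiset.eq_zero_of_forall_notMem fun x hx => by
        have : x ∈ f I := Multiset.mem_add.2 (Or.inl hx)
        rw [h] at this
        exact Multiset.notMem_zero _ this)
    · simp only [hf, sup_add_rep, Multiset.card_add, Multiset.card_replicate]
      omega
  have hgS : g '' Set.Iio N ⊆ idx d a₁ b₁ n := by
    rintro _ ⟨t, ht, rfl⟩
    have ht' : t < N := ht
    have hc : Multiset.card (g t) = N := by
      simp only [hg, Multiset.card_add, Multiset.card_replicate]; omega
    refine ⟨?_, ?_⟩
    · rw [← Multiset.card_pos]; omega
    · rw [hgsup t ht', hc]; omega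
  have hdisj : Disjoint (f '' idx d a₂ b₂ n) (g '' Set.Iio N) := by
    rw [Set.disjoint_left]
    rintro _ ⟨I, _, rfl⟩ ⟨t, ht, h⟩
    have hs : I.sup = K := by
      have := congrArg Multiset.sup h
      rw [hgsup t ht] at this
      simp only [hf, sup_add_rep] at this
      exact this.symm
    have h0 : 0 ∈ g t := by
      rw [h]
      exact Multiset.mem_add.2 (Or.inr (Multiset.mem_replicate.2 ⟨by rw [hs]; omega, rfl⟩))
    rcases Multiset.mem_add.1 h0 with h | h
    · have := Multiset.eq_of_mem_replicate h; omega
    · have := Multiset.eq_of_mem_replicate h; omega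
  have h1 := Set.ncard_union_eq hdisj (hfin.subset hfS) (hfin.subset hgS)
  rw [Set.ncard_image_of_injective _ hfinj, Set.ncard_image_of_injective _ hginj] at h1
  have h2 : (Set.Iio N).ncard = N := by
    rw [← Finset.coe_Iio, Set.ncard_coe_finset, Nat.card_Iio]
  rw [h2] at h1
  rw [← h1]
  exact Set.ncard_le_ncard (Set.union_subset hfS hgS) hfin

theorem stmt_6 (d a₁ b₁ a₂ b₂ : ℕ) (hd : 1 ≤ d)
    (ha₁ : 0 < a₁) (hab₁ : a₁ < b₁) (hb₁ : b₁ ≤ d)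
    (ha₂ : 0 < a₂) (hab₂ : a₂ < b₂) (hb₂ : b₂ ≤ d)
    (haa : a₁ ≤ a₂) (hbb : b₁ ≤ b₂) (hne : ¬(a₁ = a₂ ∧ b₁ = b₂)) :
    Tendsto (fun n => (ellP d a₁ b₁ n : ℤ) - (ellP d a₂ b₂ n : ℤ)) atTop atTop := by 
  obtain ⟨K, hK, hlt⟩ : ∃ K, 2 ≤ K ∧ pp d a₁ b₁ K < pp d a₂ b₂ K := by
    by_cases h : a₁ = a₂
    · exact ⟨3, by omega, by simp [pp]; omega⟩
    · exact ⟨2, le_rfl, by simp [pp]; omega⟩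
  rw [tendsto_atTop]
  intro C
  filter_upwards [eventually_ge_atTop (C.toNat + pp d a₁ b₁ K)] with n hn
  have := main_bound ha₁ hab₁ hb₁ haa hbb K hK hlt n
  rw [ellP_eq ha₁ hab₁ hb₁, ellP_eq ha₂ hab₂ hb₂]
  omega
end

section
/- Let X be a set of positive integers, let α ∈ X, and let n ≥ α be an integer. Then the number of partitions with perimeter n whose largest part is α and all of whose parts lie in X equals the binomial coefficient C(|X_α| + n − α − 1, n − α), where X_α = {x ∈ X : x ≤ α}. -/
open Multiset Finset Filter

theorem stmt_9 (X : Set ℕ) (hX : ∀ x ∈ X, 0 < x) (α n : ℕ) (hα : α ∈ X) (hn : α ≤ n) :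
    rP n (fun M => M.sup = α ∧ ∀ x ∈ M, x ∈ X) =
      Nat.choose ({x ∈ X | x ≤ α}.ncard + n - α - 1) (n - α) := by
  classical
  have hαpos := hX α hα
  have hfin : {x ∈ X | x ≤ α}.Finite := (Set.finite_Iic α).subset (fun x hx => hx.2)
  haveI : Fintype {x ∈ X | x ≤ α} := hfin.fintype
  let f : Sym {x ∈ X | x ≤ α} (n - α) → Multiset ℕ :=
    fun s => α ::ₘ (s.1.map Subtype.val)
  have hf : Function.Injective f := by
    intro s t h
    have h1 := (Multiset.cons_inj_right α).1 h
    exact Subtype.ext (Multiset.map_injective Subtype.val_injective h1)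
  have hset : {M : Multiset ℕ | IsPartition M ∧ perim M = n ∧
      (M.sup = α ∧ ∀ x ∈ M, x ∈ X)} = Set.range f := by
    ext M
    constructor
    · rintro ⟨⟨h0, hpos⟩, hper, hsup, hMX⟩
      have hle : ∀ x ∈ M, x ≤ α := fun x hx => hsup ▸ Multiset.le_sup hx
      have hmem : α ∈ M := by
        by_contra hc
        have : M.sup ≤ α - 1 := Multiset.sup_le.2 (fun x hx => by
          have h1 := hle x hx
          have h2 : x ≠ α := fun h => hc (h ▸ hx)
          omega)
        omega
      obtain ⟨N, rfl⟩ := Multiset.exists_cons_of_mem hmem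
      have hcard : Multiset.card N = n - α := by
        unfold perim at hper
        rw [hsup, Multiset.card_cons] at hper
        omega
      have hN : ∀ x ∈ N, x ∈ {x ∈ X | x ≤ α} := fun x hx =>
        ⟨hMX x (Multiset.mem_cons_of_mem hx), hle x (Multiset.mem_cons_of_mem hx)⟩
      lift N to Multiset {x ∈ X | x ≤ α} using hN
      exact ⟨⟨N, by simpa using hcard⟩, rfl⟩
    · rintro ⟨⟨N, hN⟩, rfl⟩
      have hs : (f ⟨N, hN⟩).sup = α := by
        apply le_antisymm
        · apply Multiset.sup_le.2
          intro x hx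
          rcases Multiset.mem_cons.1 hx with rfl | hx
          · exact le_rfl
          · obtain ⟨y, _, rfl⟩ := Multiset.mem_map.1 hx
            exact y.2.2
        · exact Multiset.le_sup (Multiset.mem_cons_self _ _)
      have hm : ∀ x ∈ f ⟨N, hN⟩, x ∈ X := by
        intro x hx
        rcases Multiset.mem_cons.1 hx with rfl | hx
        · exact hα
        · obtain ⟨y, _, rfl⟩ := Multiset.mem_map.1 hx
          exact y.2.1
      refine ⟨⟨Multiset.cons_ne_zero, fun x hx => hX x (hm x hx)⟩, ?_, hs, hm⟩
      unfold perim
      rw [hs]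
      have : Multiset.card (f ⟨N, hN⟩) = n - α + 1 := by
        simp [f, hN]
      omega
  unfold rP
  rw [hset, ← Set.image_univ, Set.ncard_image_of_injective _ hf, Set.ncard_univ,
    Nat.card_eq_fintype_card, Sym.card_sym_eq_choose, ← Nat.card_eq_fintype_card,
    Nat.card_coe_set_eq, Nat.add_sub_assoc hn]
end

section
/- Let (a_i)_{i≥0} be a strictly increasing sequence of positive integers, S = {a_0, a_1, a_2, …}, and let n ≥ a_0 be an integer. Then r_S(n) = ∑_{i ≥ 0, a_i ≤ n} C(n − a_i + i, n − a_i), where C denotes the binomial coefficient. -/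
open Multiset Finset Filter

theorem sup_cons_map_aux (a : ℕ → ℕ) (ha : StrictMono a) (i k : ℕ) (s : Sym (Fin (i+1)) k) :
    (a i ::ₘ (s : Multiset (Fin (i+1))).map (fun j : Fin (i+1) => a j)).sup = a i := by
  rw [Multiset.sup_cons]
  apply sup_eq_left.2
  apply Multiset.sup_le.2
  intro b hb
  obtain ⟨j, _, rfl⟩ := Multiset.mem_map.1 hb
  exact ha.monotone (Nat.lt_succ_iff.1 j.2)

theorem sup_mem_aux (M : Multiset ℕ) (h : M ≠ 0) : M.sup ∈ M := by
  induction M using Multiset.induction with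
  | empty => exact absurd rfl h
  | cons b M ih =>
    by_cases hM : M = 0
    · subst hM; simp
    · rw [Multiset.sup_cons]
      rcases le_total b M.sup with h1 | h1
      · rw [sup_eq_right.2 h1]; exact Multiset.mem_cons_of_mem (ih hM)
      · rw [sup_eq_left.2 h1]; exact Multiset.mem_cons_self _ _

theorem stmt_10 (a : ℕ → ℕ) (ha : StrictMono a) (hpos : ∀ i, 0 < a i)
    (n : ℕ) (hn : a 0 ≤ n) :
    rP n (fun M => ∀ x ∈ M, x ∈ Set.range a) =
      ∑ i ∈ (Finset.range (n + 1)).filter (fun i => a i ≤ n),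
        Nat.choose (n - a i + i) (n - a i) := by
  classical
  have key : {M : Multiset ℕ | IsPartition M ∧ perim M = n ∧ ∀ x ∈ M, x ∈ Set.range a} =
      (((Finset.range (n + 1)).filter (fun i => a i ≤ n)).biUnion (fun i =>
        (Finset.univ : Finset (Sym (Fin (i+1)) (n - a i))).image
          (fun s : Sym (Fin (i+1)) (n - a i) => a i ::ₘ (s : Multiset (Fin (i+1))).map (fun j : Fin (i+1) => a j))) : Finset (Multiset ℕ)) := by
    ext M
    simp only [Set.mem_ofPred_eq, Finset.coe_biUnion, Set.mem_iUnion, Finset.mem_coe,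
      Finset.mem_image, Finset.mem_univ, true_and, Finset.mem_filter, Finset.mem_range, exists_prop]
    constructor
    · rintro ⟨⟨h0, _⟩, hp, hr⟩
      have hm := sup_mem_aux M h0
      obtain ⟨i, hi⟩ := hr _ hm
      obtain ⟨N, hN⟩ := Multiset.exists_cons_of_mem hm
      have hc : Multiset.card M = Multiset.card N + 1 := by rw [hN, Multiset.card_cons]
      unfold perim at hp
      have hid := ha.id_le i
      simp only [id] at hid
      refine ⟨i, ⟨by omega, by omega⟩, ?_⟩
      have hex : ∀ x ∈ N, ∃ j : Fin (i+1), a j = x := by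
        intro x hx
        have hxM : x ∈ M := by rw [hN]; exact Multiset.mem_cons_of_mem hx
        obtain ⟨j, rfl⟩ := hr x hxM
        have := Multiset.le_sup hxM
        rw [← hi] at this
        exact ⟨⟨j, by have := ha.le_iff_le.1 this; omega⟩, rfl⟩
      have : ∃ K : Multiset (Fin (i+1)), K.map (fun j : Fin (i+1) => a j) = N := by
        haveI : CanLift ℕ (Fin (i+1)) (fun j : Fin (i+1) => a j)
          (fun x => ∃ j : Fin (i+1), a j = x) := ⟨fun x hx => hx⟩
        have := (Multiset.canLift (fun j : Fin (i+1) => a j)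
          (fun x => ∃ j : Fin (i+1), a j = x)).prf N hex
        exact this
      obtain ⟨K, hK⟩ := this
      refine ⟨⟨K, ?_⟩, ?_⟩
      · have : Multiset.card K = Multiset.card N := by rw [← hK, Multiset.card_map]
        omega
      · change a i ::ₘ K.map _ = M
        rw [hK, hi, ← hN]
    · rintro ⟨i, ⟨_, hi⟩, s, rfl⟩
      have hr : ∀ x ∈ a i ::ₘ (s : Multiset (Fin (i+1))).map (fun j : Fin (i+1) => a j), x ∈ Set.range a := by
        intro x hx
        rcases Multiset.mem_cons.1 hx with rfl | hx
        · exact ⟨i, rfl⟩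
        · obtain ⟨j, _, rfl⟩ := Multiset.mem_map.1 hx
          exact ⟨j, rfl⟩
      refine ⟨⟨Multiset.cons_ne_zero, ?_⟩, ?_, hr⟩
      · intro x hx
        obtain ⟨j, rfl⟩ := hr x hx
        exact hpos j
      · unfold perim
        rw [sup_cons_map_aux a ha]
        have hs : Multiset.card (s : Multiset (Fin (i+1))) = n - a i := s.2
        rw [Multiset.card_cons, Multiset.card_map, hs]
        omega
  unfold rP
  rw [key, Set.ncard_coe_finset, Finset.card_biUnion]
  · refine Finset.sum_congr rfl fun i _ => ?_
    rw [Finset.card_image_of_injective, Finset.card_univ, Sym.card_sym_eq_choose, Fintype.card_fin]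
    · congr 1; omega
    · intro s t h
      have h2 := (Multiset.cons_inj_right _).1 h
      exact Sym.coe_injective (Multiset.map_injective (fun x y hxy => Fin.ext (ha.injective hxy)) h2)
  · intro i _ j _ hij
    rw [Function.onFun, Finset.disjoint_left]
    intro M h1 h2
    obtain ⟨s, _, rfl⟩ := Finset.mem_image.1 h1
    obtain ⟨t, _, ht⟩ := Finset.mem_image.1 h2
    apply hij
    have := congrArg Multiset.sup ht
    rw [sup_cons_map_aux a ha, sup_cons_map_aux a ha] at this
    exact (ha.injective this).symm
end

section
/- The following identity holds as formal power series in the variables x, y, z, q over ℤ: (1 − (x+y)q + (1−z)x y² q³) · ∑_{α,λ,n ≥ 1} ∑_{j ≥ 0} FD_{j,2}(α,λ,n) x^α y^λ z^j qⁿ = x y q (1 − (1−z) y q). -/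
open Multiset Finset Filter

/-- `FDt j α lam n`: partitions with perimeter n, largest part α, lam parts, and exactly j
distinct part values repeated (≥ 2 times). -/
noncomputable def FDt (j α lam n : ℕ) : ℕ :=
  Set.ncard {M : Multiset ℕ | IsPartition M ∧ M.sup = α ∧ Multiset.card M = lam ∧
    perim M = n ∧ (M.toFinset.filter (fun v => 2 ≤ M.count v)).card = j}

/-- The generating series ∑ FDt(j,α,λ,n) x^α y^λ z^j q^n, with variables
x = X 0, y = X 1, z = X 2, q = X 3. -/
noncomputable def FDseries : MvPowerSeries (Fin 4) ℤ :=
  fun e => if 1 ≤ e 0 ∧ 1 ≤ e 1 ∧ 1 ≤ e 3 then (FDt (e 2) (e 0) (e 1) (e 3) : ℤ) else 0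

/-- number of distinct repeated part values -/
def repc (M : Multiset ℕ) : ℕ := (M.toFinset.filter (fun v => 2 ≤ M.count v)).card

/-- multisets with parts in `[1,a]`, `l` parts, `j` repeated values -/
def UU (a : ℕ) (l j : ℤ) : Set (Multiset ℕ) :=
  {M | (∀ x ∈ M, 0 < x ∧ x ≤ a) ∧ (Multiset.card M : ℤ) = l ∧ (repc M : ℤ) = j}

/-- those with parts at most `a+1` and `a+1` appearing at least `k` times -/
def WW (a : ℕ) (l j : ℤ) (k : ℕ) : Set (Multiset ℕ) :=
  {M | M ∈ UU (a + 1) l j ∧ k ≤ M.count (a + 1)}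

/-- those with `a+1` appearing exactly `k` times -/
def EE (a : ℕ) (l j : ℤ) (k : ℕ) : Set (Multiset ℕ) :=
  {M | M ∈ UU (a + 1) l j ∧ M.count (a + 1) = k}

lemma UU_finite (a : ℕ) (l j : ℤ) : (UU a l j).Finite := by
  apply (Set.finite_Iic (l.toNat • (Finset.Icc 1 a).val)).subset
  rintro M ⟨h1, h2, -⟩
  rw [Set.mem_Iic, Multiset.le_iff_count]
  intro x
  by_cases hx : x ∈ M
  · have := h1 x hx
    have hc : Multiset.count x (Finset.Icc 1 a).val = 1 :=
      Multiset.count_eq_one_of_mem (Finset.Icc 1 a).nodup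
        (by rw [Finset.mem_val, Finset.mem_Icc]; omega)
    rw [Multiset.count_nsmul, hc]
    have := Multiset.count_le_card x M
    omega
  · rw [Multiset.count_eq_zero_of_notMem hx]; exact Nat.zero_le _

lemma WW_finite (a : ℕ) (l j : ℤ) (k : ℕ) : (WW a l j k).Finite :=
  (UU_finite (a + 1) l j).subset fun _ h => h.1

lemma EE_finite (a : ℕ) (l j : ℤ) (k : ℕ) : (EE a l j k).Finite :=
  (UU_finite (a + 1) l j).subset fun _ h => h.1

lemma repc_add (M : Multiset ℕ) (b m : ℕ) (hb : b ∉ M) :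
    repc (M + Multiset.replicate m b) = repc M + if 2 ≤ m then 1 else 0 := by
  have hb0 := Multiset.count_eq_zero_of_notMem hb
  unfold repc
  split_ifs with h
  · rw [← Finset.card_insert_of_notMem (a := b) (by simp [hb])]
    congr 1
    ext v
    by_cases hv : v = b
    · subst hv
      have h3 : v ∈ Multiset.replicate m v ↔ m ≠ 0 := by simp [Multiset.mem_replicate]
      simp only [Finset.mem_filter, Finset.mem_insert, Multiset.mem_toFinset, Multiset.mem_add,
        Multiset.count_add, hb0, Multiset.count_replicate_self, h3]
      simp [hb]; omega
    · have h1 : v ∈ Multiset.replicate m b ↔ False := by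
        simp [Multiset.mem_replicate, hv]
      have h2 : Multiset.count v (Multiset.replicate m b) = 0 :=
        Multiset.count_eq_zero.2 (by simp [h1])
      simp only [Finset.mem_filter, Finset.mem_insert, Multiset.mem_toFinset, Multiset.mem_add,
        Multiset.count_add, h1, h2, hv, or_false, false_or, add_zero]
  · congr 1
    ext v
    by_cases hv : v = b
    · subst hv
      have h3 : v ∈ Multiset.replicate m v ↔ m ≠ 0 := by simp [Multiset.mem_replicate]
      simp only [Finset.mem_filter, Finset.mem_insert, Multiset.mem_toFinset, Multiset.mem_add,
        Multiset.count_add, hb0, Multiset.count_replicate_self, h3]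
      simp [hb]; omega
    · have h1 : v ∈ Multiset.replicate m b ↔ False := by
        simp [Multiset.mem_replicate, hv]
      have h2 : Multiset.count v (Multiset.replicate m b) = 0 :=
        Multiset.count_eq_zero.2 (by simp [h1])
      simp only [Finset.mem_filter, Finset.mem_insert, Multiset.mem_toFinset, Multiset.mem_add,
        Multiset.count_add, h1, h2, hv, or_false, false_or, add_zero]

lemma repc_cons (M : Multiset ℕ) (b : ℕ) (hb : 2 ≤ M.count b) :
    repc (b ::ₘ M) = repc M := by
  have hm : b ∈ M := Multiset.count_pos.1 (by omega)
  unfold repc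
  congr 1
  ext v
  by_cases hv : v = b
  · subst hv
    simp [hm]; omega
  · simp [hv, Multiset.count_cons_of_ne]

lemma EE_card (a : ℕ) (l j : ℤ) (k : ℕ) :
    (EE a l j k).ncard = (UU a (l - k) (j - if 2 ≤ k then 1 else 0)).ncard := by
  have : EE a l j k = (fun M => M + Multiset.replicate k (a + 1)) ''
      (UU a (l - k) (j - if 2 ≤ k then 1 else 0)) := by
    ext M
    constructor
    · rintro ⟨⟨h1, h2, h3⟩, h4⟩
      have hle : Multiset.replicate k (a + 1) ≤ M :=
        Multiset.le_count_iff_replicate_le.1 h4.ge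
      obtain ⟨N, rfl⟩ := Multiset.le_iff_exists_add.1 hle
      rw [add_comm (Multiset.replicate k (a + 1)) N] at *
      have hN : a + 1 ∉ N := by
        rw [Multiset.count_add, Multiset.count_replicate_self] at h4
        exact Multiset.count_eq_zero.1 (by omega)
      refine ⟨N, ⟨?_, ?_, ?_⟩, rfl⟩
      · intro x hx
        have := h1 x (Multiset.mem_add.2 (Or.inl hx))
        have : x ≠ a + 1 := fun h => hN (h ▸ hx)
        omega
      · simp at h2; omega
      · rw [repc_add _ _ _ hN] at h3
        push_cast at h3
        omega
    · rintro ⟨N, ⟨h1, h2, h3⟩, rfl⟩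
      have hN : a + 1 ∉ N := fun h => by have := h1 _ h; omega
      refine ⟨⟨?_, ?_, ?_⟩, ?_⟩
      · intro x hx
        rcases Multiset.mem_add.1 hx with hx | hx
        · have := h1 x hx; omega
        · have := Multiset.eq_of_mem_replicate hx; omega
      · simp; omega
      · simp only
        rw [repc_add _ _ _ hN]
        push_cast
        omega
      · simp [Multiset.count_eq_zero_of_notMem hN]
  rw [this, Set.ncard_image_of_injective _ (add_left_injective _)]

lemma WW_succ (a : ℕ) (l j : ℤ) (k : ℕ) :
    (WW a l j k).ncard = (EE a l j k).ncard + (WW a l j (k + 1)).ncard := by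
  rw [← Set.ncard_union_eq _ (EE_finite a l j k) (WW_finite a l j (k+1))]
  · congr 1
    ext M
    simp only [WW, EE, Set.mem_union, Set.mem_ofPred_eq]
    constructor
    · rintro ⟨h, h'⟩
      by_cases h2 : M.count (a + 1) = k
      · exact Or.inl ⟨h, h2⟩
      · exact Or.inr ⟨h, by omega⟩
    · rintro (⟨h, h'⟩ | ⟨h, h'⟩)
      · exact ⟨h, by omega⟩
      · exact ⟨h, by omega⟩
  · rw [Set.disjoint_left]
    rintro M ⟨-, h⟩ ⟨-, h'⟩
    omega

lemma WW_cons (a : ℕ) (l j : ℤ) : (WW a l j 3).ncard = (WW a (l - 1) j 2).ncard := by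
  have : WW a l j 3 = (fun M => (a + 1) ::ₘ M) '' WW a (l - 1) j 2 := by
    ext M
    constructor
    · rintro ⟨⟨h1, h2, h3⟩, h4⟩
      obtain ⟨N, rfl⟩ := Multiset.exists_cons_of_mem (Multiset.count_pos.1 (by omega : 0 < M.count (a+1)))
      rw [Multiset.count_cons_self] at h4
      rw [repc_cons _ _ (by omega)] at h3
      refine ⟨N, ⟨⟨fun x hx => h1 x (Multiset.mem_cons_of_mem hx), ?_, h3⟩, by omega⟩, rfl⟩
      simp at h2; omega
    · rintro ⟨N, ⟨⟨h1, h2, h3⟩, h4⟩, rfl⟩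
      refine ⟨⟨?_, ?_, ?_⟩, ?_⟩
      · intro x hx
        rcases Multiset.mem_cons.1 hx with hx | hx
        · omega
        · exact h1 x hx
      · simp; omega
      · simp only
        rw [repc_cons _ _ h4]; exact h3
      · simp; omega
  rw [this, Set.ncard_image_of_injective _ (fun _ _ h => by simpa using h)]

/-- integer-indexed count with largest part exactly `a` -/
noncomputable def CZ (a l j : ℤ) : ℤ :=
  (Set.ncard {M : Multiset ℕ | IsPartition M ∧ (M.sup : ℤ) = a ∧ (Multiset.card M : ℤ) = l ∧
    (repc M : ℤ) = j} : ℤ)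

lemma CZ_zero (a l j : ℤ) (h : a ≤ 0 ∨ l ≤ 0 ∨ j < 0) : CZ a l j = 0 := by
  unfold CZ
  rw [Nat.cast_eq_zero]
  convert Set.ncard_empty (Multiset ℕ)
  rw [Set.eq_empty_iff_forall_notMem]
  rintro M ⟨⟨h0, hp⟩, h1, h2, h3⟩
  obtain ⟨x, hx⟩ := Multiset.exists_mem_of_ne_zero h0
  have := hp x hx
  have := Multiset.le_sup hx
  have := Multiset.card_pos.2 h0
  omega

lemma CZ_succ (a : ℕ) (l j : ℤ) : CZ (a + 1) l j = (WW a l j 1).ncard := by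
  unfold CZ
  congr 2
  ext M
  constructor
  · rintro ⟨⟨h0, hp⟩, h1, h2, h3⟩
    have h1 : M.sup = a + 1 := by omega
    refine ⟨⟨fun x hx => ⟨hp x hx, h1 ▸ Multiset.le_sup hx⟩, h2, h3⟩, ?_⟩
    rw [Nat.succ_le_iff, Multiset.count_pos]
    by_contra hc
    have : M.sup ≤ a := Multiset.sup_le.2 fun x hx => by
      have := Multiset.le_sup hx
      have : x ≠ a + 1 := fun h => hc (h ▸ hx)
      omega
    omega
  · rintro ⟨⟨h1, h2, h3⟩, h4⟩
    have hm : a + 1 ∈ M := Multiset.count_pos.1 (by omega)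
    refine ⟨⟨fun h => by simp [h] at hm, fun x hx => (h1 x hx).1⟩, ?_, h2, h3⟩
    have := Multiset.le_sup hm
    have : M.sup ≤ a + 1 := Multiset.sup_le.2 fun x hx => (h1 x hx).2
    omega

lemma CZ_diff (a : ℕ) (l j : ℤ) :
    CZ (a + 1) l j - CZ (a + 1) (l - 1) j =
      (UU a (l - 1) j).ncard - (UU a (l - 2) j).ncard + (UU a (l - 2) (j - 1)).ncard := by
  have e1 : ∀ l j, (EE a l j 1).ncard = (UU a (l - 1) j).ncard := fun l j => by
    simpa using EE_card a l j 1
  have e2 : ∀ l j, (EE a l j 2).ncard = (UU a (l - 2) (j - 1)).ncard := fun l j => by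
    simpa using EE_card a l j 2
  have w1 := WW_succ a l j 1
  have w1' := WW_succ a (l - 1) j 1
  have w2 := WW_succ a l j 2
  rw [WW_cons, e2] at w2
  rw [e1] at w1 w1'
  rw [show l - 1 - 1 = l - 2 by ring] at w1'
  rw [CZ_succ, CZ_succ]
  norm_num at w1 w1' w2
  omega

lemma UU_succ (a : ℕ) (l j : ℤ) :
    ((UU (a + 1) l j).ncard : ℤ) = (UU a l j).ncard + CZ (a + 1) l j := by
  have e0 : (EE a l j 0).ncard = (UU a l j).ncard := by simpa using EE_card a l j 0
  have w0 := WW_succ a l j 0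
  have : WW a l j 0 = UU (a + 1) l j := by ext; simp [WW]
  rw [this, e0] at w0
  rw [CZ_succ, w0]; push_cast; rfl

lemma UU_zero (l j : ℤ) : ((UU 0 l j).ncard : ℤ) = if l = 0 ∧ j = 0 then 1 else 0 := by
  have key : ∀ M, M ∈ UU 0 l j ↔ M = 0 ∧ l = 0 ∧ j = 0 := by
    intro M
    constructor
    · rintro ⟨h1, h2, h3⟩
      have : M = 0 := Multiset.eq_zero_of_forall_notMem fun x hx => by
        have := h1 x hx; omega
      subst this
      simp [repc] at h2 h3
      exact ⟨rfl, h2.symm, h3.symm⟩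
    · rintro ⟨rfl, rfl, rfl⟩
      simp [UU, repc]
  split_ifs with h
  · have : UU 0 l j = {0} := by ext M; rw [key]; simp [h]
    rw [this]; simp
  · have : UU 0 l j = ∅ := by ext M; rw [key]; simp; tauto
    rw [this]; simp

lemma CZ_rec (a l j : ℤ) :
    CZ a l j - CZ (a - 1) l j - CZ a (l - 1) j + CZ (a - 1) (l - 2) j
      - CZ (a - 1) (l - 2) (j - 1) =
    (if a = 1 ∧ l = 1 ∧ j = 0 then 1 else 0) - (if a = 1 ∧ l = 2 ∧ j = 0 then 1 else 0)
      + (if a = 1 ∧ l = 2 ∧ j = 1 then 1 else 0) := by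
  rcases lt_trichotomy a 1 with h | h | h
  · rw [CZ_zero _ _ _ (by omega), CZ_zero _ _ _ (by omega), CZ_zero _ _ _ (by omega),
      CZ_zero _ _ _ (by omega), CZ_zero _ _ _ (by omega)]
    simp [h.ne]
  · subst h
    have := CZ_diff 0 l j
    rw [UU_zero, UU_zero, UU_zero] at this
    norm_num at this
    rw [CZ_zero (1 - 1) _ _ (by omega), CZ_zero (1 - 1) _ _ (by omega),
      CZ_zero (1 - 1) _ _ (by omega)]
    simp only [sub_eq_zero] at this
    simp only [true_and]
    linarith
  · obtain ⟨b, rfl⟩ : ∃ b : ℕ, a = (b + 1 : ℕ) + 1 := ⟨(a - 2).toNat, by omega⟩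
    have h1 := CZ_diff (b + 1) l j
    have h2 := CZ_diff b l j
    rw [UU_succ, UU_succ, UU_succ] at h1
    have : ((b + 1 : ℕ) : ℤ) + 1 ≠ 1 := by omega
    simp only [this, false_and, if_false]
    rw [add_sub_cancel_right]
    push_cast at *
    linarith

/-- integer-indexed coefficient -/
noncomputable def GZ (a l j n : ℤ) : ℤ := if n = a + l - 1 then CZ a l j else 0

lemma GZ_zero (a l j n : ℤ) (h : a ≤ 0 ∨ l ≤ 0 ∨ j < 0 ∨ n ≤ 0) : GZ a l j n = 0 := by
  unfold GZ
  split_ifs with hn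
  · exact CZ_zero _ _ _ (by omega)
  · rfl

lemma FD_coeff (e : Fin 4 →₀ ℕ) :
    MvPowerSeries.coeff e FDseries = GZ (e 0) (e 1) (e 2) (e 3) := by
  change FDseries e = _
  unfold FDseries
  split_ifs with h
  · unfold GZ FDt CZ
    split_ifs with hn
    · congr 2
      ext M
      simp only [Set.mem_ofPred_eq, perim, repc, Nat.cast_inj]
      constructor
      · rintro ⟨h1, h2, h3, h4, h5⟩; exact ⟨h1, h2, h3, h5⟩
      · rintro ⟨h1, h2, h3, h5⟩; exact ⟨h1, h2, h3, by omega, h5⟩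
    · rw [Nat.cast_eq_zero]
      convert Set.ncard_empty (Multiset ℕ)
      rw [Set.eq_empty_iff_forall_notMem]
      rintro M ⟨h1, h2, h3, h4, h5⟩
      unfold perim at h4
      omega
  · rw [GZ_zero _ _ _ _ (by omega)]

/-- exponent vectors -/
noncomputable def ev (a b c d : ℕ) : Fin 4 →₀ ℕ := Finsupp.equivFunOnFinite.symm ![a, b, c, d]

lemma ev_le (a b c d : ℕ) (e : Fin 4 →₀ ℕ) :
    ev a b c d ≤ e ↔ a ≤ e 0 ∧ b ≤ e 1 ∧ c ≤ e 2 ∧ d ≤ e 3 := by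
  rw [Finsupp.le_def]
  simp [Fin.forall_fin_succ, ev]

lemma eq_ev (a b c d : ℕ) (e : Fin 4 →₀ ℕ) :
    e = ev a b c d ↔ e 0 = a ∧ e 1 = b ∧ e 2 = c ∧ e 3 = d := by
  rw [Finsupp.ext_iff]
  simp [Fin.forall_fin_succ, ev]

lemma mono_coeff (a b c d : ℕ) (e : Fin 4 →₀ ℕ) :
    MvPowerSeries.coeff e (MvPowerSeries.monomial (ev a b c d) (1 : ℤ) * FDseries) =
      GZ (e 0 - a) (e 1 - b) (e 2 - c) (e 3 - d) := by
  rw [MvPowerSeries.coeff_monomial_mul]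
  split_ifs with h
  · rw [one_mul, FD_coeff]
    rw [ev_le] at h
    obtain ⟨h0, h1, h2, h3⟩ := h
    simp only [Finsupp.tsub_apply]
    have : ev a b c d 0 = a ∧ ev a b c d 1 = b ∧ ev a b c d 2 = c ∧ ev a b c d 3 = d := by
      simp [ev]
    rw [this.1, this.2.1, this.2.2.1, this.2.2.2, Nat.cast_sub h0, Nat.cast_sub h1,
      Nat.cast_sub h2, Nat.cast_sub h3]
  · rw [ev_le] at h
    rw [GZ_zero _ _ _ _ (by omega)]

lemma mono_eq (a b c d : ℕ) :
    MvPowerSeries.monomial (ev a b c d) (1 : ℤ) =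
      MvPowerSeries.X 0 ^ a * MvPowerSeries.X 1 ^ b * MvPowerSeries.X 2 ^ c *
        MvPowerSeries.X 3 ^ d := by
  simp only [MvPowerSeries.X_pow_eq, MvPowerSeries.monomial_mul_monomial, mul_one]
  congr 2
  ext i
  fin_cases i <;> simp [ev]

open MvPowerSeries in
theorem stmt_15 :
    ((1 : MvPowerSeries (Fin 4) ℤ) - (X 0 + X 1) * X 3
          + (1 - X 2) * X 0 * (X 1) ^ 2 * (X 3) ^ 3) * FDseries =
      X 0 * X 1 * X 3 * (1 - (1 - X 2) * X 1 * X 3) := by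
  have hL : ((1 : MvPowerSeries (Fin 4) ℤ) - (X 0 + X 1) * X 3
          + (1 - X 2) * X 0 * (X 1) ^ 2 * (X 3) ^ 3) * FDseries =
      monomial (ev 0 0 0 0) 1 * FDseries - monomial (ev 1 0 0 1) 1 * FDseries
        - monomial (ev 0 1 0 1) 1 * FDseries + monomial (ev 1 2 0 3) 1 * FDseries
        - monomial (ev 1 2 1 3) 1 * FDseries := by
    simp only [mono_eq]; ring
  have hR : (X 0 * X 1 * X 3 * (1 - (1 - X 2) * X 1 * X 3) : MvPowerSeries (Fin 4) ℤ) =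
      monomial (ev 1 1 0 1) 1 - monomial (ev 1 2 0 2) 1 + monomial (ev 1 2 1 2) 1 := by
    simp only [mono_eq]; ring
  rw [hL, hR]
  ext e
  simp only [_root_.map_add, _root_.map_sub, mono_coeff, coeff_monomial, eq_ev]
  have key := CZ_rec (e 0) (e 1) (e 2)
  unfold GZ
  by_cases hn : (e 3 : ℤ) = e 0 + e 1 - 1
  · rw [if_pos (by push_cast; omega), if_pos (by push_cast; omega),
      if_pos (by push_cast; omega), if_pos (by push_cast; omega), if_pos (by push_cast; omega)]
    push_cast
    simp only [sub_zero]
    rw [key]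
    congr 1
    · congr 1
      · exact if_congr (by omega) rfl rfl
      · exact if_congr (by omega) rfl rfl
    · exact if_congr (by omega) rfl rfl
  · rw [if_neg (by push_cast; omega), if_neg (by push_cast; omega),
      if_neg (by push_cast; omega), if_neg (by push_cast; omega), if_neg (by push_cast; omega),
      if_neg (by omega), if_neg (by omega), if_neg (by omega)]
    simp
end
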